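/- (Theorem 12) Let 0 < θ, θ₀ < 1, 0 < q₀, r₀, r₁, r ≤ ∞, a, a₀, b₀, b₁ ∈ SV, ‖s^{-1/r₀} b₀(s)/a₀(s)‖_{r₀,(1,∞)} < ∞, and ‖s^{-1/r₁} b₁(s)‖_{r₁,(0,1)} < ∞. Put c₀(t) = a₀(t) ‖s^{-1/r₀} b₀(s)/a₀(s)‖_{r₀,(t,∞)}, c₁(t) = ‖s^{-1/r₁} b₁(s)‖_{r₁,(0,t)}, and ρ(t) = t^{1-θ₀} c₀(t)/c₁(t). Then (Ā^𝓛_{θ₀,r₀,b₀,q₀,a₀}, Ā_{1,r₁;b₁})_{θ,r;a} ≅ Ā_{η,r;a^#}, where η = (1-θ)θ₀ + θ and a^#(t) = c₀(t)^{1-θ} c₁(t)^θ a(ρ(t)). -/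

import Mathlib

open MeasureTheory Set ENNReal Filter

noncomputable section

/-- The `L_q` quasi-norm (with respect to Lebesgue measure) of an `ℝ≥0∞`-valued
function over a set of reals; for `q = ∞` it is the essential supremum. -/
def LqNorm (q : ℝ≥0∞) (s : Set ℝ) (g : ℝ → ℝ≥0∞) : ℝ≥0∞ :=
  if q = ∞ then essSup g (volume.restrict s)
  else (∫⁻ t in s, g t ^ q.toReal) ^ q⁻¹.toReal

/-- The weight `s ↦ s ^ (-1/r) * b s`, as an `ℝ≥0∞`-valued function
(`1/∞ = 0` by convention). -/
def svWgt (r : ℝ≥0∞) (b : ℝ → ℝ) : ℝ → ℝ≥0∞ :=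
  fun s => ENNReal.ofReal (s ^ (-(r⁻¹.toReal)) * b s)

/-- `f` and `g` are equivalent on `s`: each is bounded by a constant multiple
of the other there. -/
def EquivOn (s : Set ℝ) (f g : ℝ → ℝ) : Prop :=
  ∃ C : ℝ, 0 < C ∧ ∀ t ∈ s, C⁻¹ * g t ≤ f t ∧ f t ≤ C * g t

/-- A positive measurable function `b` on `(0,∞)` is slowly varying if for every
`ε > 0`, `t ^ ε * b t` is equivalent to a non-decreasing function and
`t ^ (-ε) * b t` is equivalent to a non-increasing function. -/
def SlowlyVarying (b : ℝ → ℝ) : Prop :=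
  AEMeasurable b (volume.restrict (Ioi 0)) ∧ (∀ t ∈ Ioi (0:ℝ), 0 < b t) ∧
    ∀ ε : ℝ, 0 < ε →
      (∃ g : ℝ → ℝ, MonotoneOn g (Ioi 0) ∧ EquivOn (Ioi 0) (fun t => t ^ ε * b t) g) ∧
      (∃ g : ℝ → ℝ, AntitoneOn g (Ioi 0) ∧ EquivOn (Ioi 0) (fun t => t ^ (-ε) * b t) g)

/-- A quasi-Banach space continuously embedded into the ambient (Hausdorff) space `E`,
recorded via its extended-real-valued quasi-norm; the space itself is the set of
vectors of finite quasi-norm. -/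
structure QuasiBanach (E : Type*) [AddCommGroup E] [Module ℝ E] where
  N : E → ℝ≥0∞
  zero : N 0 = 0
  definite : ∀ x, N x = 0 → x = 0
  smul : ∀ (c : ℝ) (x : E), N (c • x) = ENNReal.ofReal |c| * N x
  quasi : ∃ C : ℝ≥0∞, 1 ≤ C ∧ C ≠ ∞ ∧ ∀ x y, N (x + y) ≤ C * (N x + N y)
  complete : ∀ f : ℕ → E,
    (∀ ε : ℝ≥0∞, 0 < ε → ∃ M : ℕ, ∀ m ≥ M, ∀ n ≥ M, N (f m - f n) < ε) →
    (∀ n, N (f n) ≠ ∞) →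
    ∃ g : E, N g ≠ ∞ ∧ Tendsto (fun n => N (f n - g)) atTop (nhds 0)

variable {E : Type*} [AddCommGroup E] [Module ℝ E]

/-- The Peetre K-functional of the couple whose quasi-norms are `N₀`, `N₁`. -/
def Kf (N₀ N₁ : E → ℝ≥0∞) (t : ℝ) (f : E) : ℝ≥0∞ :=
  ⨅ g : E, N₀ g + ENNReal.ofReal t * N₁ (f - g)

/-- The quasi-norm of the real interpolation space `Ā_{θ,q;b}`. -/
def normK (N₀ N₁ : E → ℝ≥0∞) (θ : ℝ) (q : ℝ≥0∞) (b : ℝ → ℝ) (f : E) : ℝ≥0∞ :=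
  LqNorm q (Ioi 0) fun u =>
    ENNReal.ofReal (u ^ (-θ - q⁻¹.toReal) * b u) * Kf N₀ N₁ u f

/-- The quasi-norm of the limiting interpolation space `Ā^𝓛_{σ,r,b,q,a}`. -/
def normL (N₀ N₁ : E → ℝ≥0∞) (σ : ℝ) (r q : ℝ≥0∞) (b a : ℝ → ℝ) (f : E) : ℝ≥0∞ :=
  LqNorm r (Ioi 0) fun t =>
    ENNReal.ofReal (t ^ (-(r⁻¹.toReal)) * (b t / a t)) *
      LqNorm q (Ioo 0 t) fun u =>
        ENNReal.ofReal (u ^ (-σ - q⁻¹.toReal) * a u) * Kf N₀ N₁ u f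

/-- The quasi-norm of the limiting interpolation space `Ā^𝓡_{σ,r,b,q,a}`. -/
def normR (N₀ N₁ : E → ℝ≥0∞) (σ : ℝ) (r q : ℝ≥0∞) (b a : ℝ → ℝ) (f : E) : ℝ≥0∞ :=
  LqNorm r (Ioi 0) fun t =>
    ENNReal.ofReal (t ^ (-(r⁻¹.toReal)) * (b t / a t)) *
      LqNorm q (Ioi t) fun u =>
        ENNReal.ofReal (u ^ (-σ - q⁻¹.toReal) * a u) * Kf N₀ N₁ u f

/-- Two (extended-real-valued) quasi-norms define the same space with
equivalent quasi-norms. -/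
def EquivNorms (nX nY : E → ℝ≥0∞) : Prop :=
  ∃ C : ℝ≥0∞, 0 < C ∧ C ≠ ∞ ∧ ∀ f : E, C⁻¹ * nY f ≤ nX f ∧ nX f ≤ C * nY f

/-! ### Potter-type bounds -/

def mm (u v : ℝ) : ℝ := max (u / v) (v / u)

lemma mm_comm (u v : ℝ) : mm u v = mm v u := max_comm _ _

lemma one_le_mm {u v : ℝ} (hu : 0 < u) (hv : 0 < v) : 1 ≤ mm u v := by
  unfold mm
  rcases le_total u v with h | h
  · exact le_max_of_le_right ((one_le_div hu).2 h)
  · exact le_max_of_le_left ((one_le_div hv).2 h)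

lemma mm_pos {u v : ℝ} (hu : 0 < u) (hv : 0 < v) : 0 < mm u v :=
  lt_of_lt_of_le one_pos (one_le_mm hu hv)

lemma mm_of_le {u v : ℝ} (hu : 0 < u) (h : u ≤ v) : mm u v = v / u := by
  unfold mm
  apply max_eq_right
  exact le_trans ((div_le_one (hu.trans_le h)).2 h) ((one_le_div hu).2 h)

lemma mm_le_iff {u v c : ℝ} (hu : 0 < u) (hv : 0 < v) :
    mm u v ≤ c ↔ u ≤ c * v ∧ v ≤ c * u := by
  unfold mm
  rw [max_le_iff, div_le_iff₀ hv, div_le_iff₀ hu]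

lemma le_mm_mul {u v : ℝ} (hu : 0 < u) (hv : 0 < v) : u ≤ mm u v * v :=
  ((mm_le_iff hu hv).1 le_rfl).1

lemma mm_triangle {u v w : ℝ} (hu : 0 < u) (hv : 0 < v) (hw : 0 < w) :
    mm u w ≤ mm u v * mm v w := by
  rw [mm_le_iff hu hw]
  have h1 := le_mm_mul hu hv
  have h2 := le_mm_mul hv hw
  have h3 := le_mm_mul hv hu
  have h4 := le_mm_mul hw hv
  rw [mm_comm v u] at h3
  rw [mm_comm w v] at h4
  have p1 := mm_pos hu hv
  have p2 := mm_pos hv hw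
  constructor
  · calc u ≤ mm u v * v := h1
      _ ≤ mm u v * (mm v w * w) := by gcongr
      _ = _ := by ring
  · calc w ≤ mm v w * v := h4
      _ ≤ mm v w * (mm u v * u) := by gcongr
      _ = _ := by ring

structure Pot (b : ℝ → ℝ) : Prop where
  pos : ∀ t, 0 < t → 0 < b t
  pot : ∀ ε : ℝ, 0 < ε → ∃ C : ℝ, 1 ≤ C ∧ ∀ u v : ℝ, 0 < u → 0 < v →
    b u ≤ C * mm u v ^ ε * b v

lemma SlowlyVarying.pot {b : ℝ → ℝ} (h : SlowlyVarying b) : Pot b := by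
  obtain ⟨-, hpos, h⟩ := h
  refine ⟨fun t ht => hpos t ht, fun ε hε => ?_⟩
  obtain ⟨⟨g, hg, C, hC, hgC⟩, ⟨k, hk, D, hD, hkD⟩⟩ := h ε hε
  refine ⟨max 1 (max (C * C) (D * D)), le_max_left _ _, fun u v hu hv => ?_⟩
  have hb := hpos v hv
  have key : ∀ X : ℝ, X ≤ max 1 (max (C * C) (D * D)) → 
      b u ≤ X * mm u v ^ ε * b v → b u ≤ max 1 (max (C * C) (D * D)) * mm u v ^ ε * b v := by
    intro X hX h
    refine h.trans ?_
    have := mm_pos hu hv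
    gcongr
  have hue : 0 < u ^ ε := Real.rpow_pos_of_pos hu _
  have hve : 0 < v ^ ε := Real.rpow_pos_of_pos hv _
  rcases le_total u v with huv | huv
  · apply key (C * C) (le_max_of_le_right (le_max_left _ _))
    rw [mm_of_le hu huv, Real.div_rpow hv.le hu.le]
    have h1 := (hgC u hu).2
    have h2 := (hgC v hv).1
    have h3 := hg hu hv huv
    rw [inv_mul_le_iff₀ hC] at h2
    have : u ^ ε * b u ≤ C * (C * (v ^ ε * b v)) :=
      h1.trans (mul_le_mul_of_nonneg_left (h3.trans h2) hC.le)
    rw [show C * C * (v ^ ε / u ^ ε) * b v = (C * (C * (v ^ ε * b v))) / u ^ ε by ring,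
      le_div_iff₀ hue]
    linarith
  · apply key (D * D) (le_max_of_le_right (le_max_right _ _))
    rw [mm_comm, mm_of_le hv huv, Real.div_rpow hu.le hv.le]
    have h1 := (hkD u hu).2
    have h2 := (hkD v hv).1
    have h3 := hk hv hu huv
    rw [inv_mul_le_iff₀ hD] at h2
    have : u ^ (-ε) * b u ≤ D * (D * (v ^ (-ε) * b v)) :=
      h1.trans (mul_le_mul_of_nonneg_left (h3.trans h2) hD.le)
    rw [Real.rpow_neg hu.le, Real.rpow_neg hv.le, inv_mul_le_iff₀ hue] at this
    calc b u ≤ _ := this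
      _ = _ := by field_simp

lemma Pot.mul {a b : ℝ → ℝ} (ha : Pot a) (hb : Pot b) : Pot (fun t => a t * b t) := by
  refine ⟨fun t ht => mul_pos (ha.pos t ht) (hb.pos t ht), fun ε hε => ?_⟩
  obtain ⟨C, hC, h1⟩ := ha.pot (ε / 2) (by positivity)
  obtain ⟨D, hD, h2⟩ := hb.pot (ε / 2) (by positivity)
  refine ⟨C * D, one_le_mul_of_one_le_of_one_le hC hD, fun u v hu hv => ?_⟩
  have := ha.pos v hv
  have := hb.pos v hv
  have := ha.pos u hu
  have := hb.pos u hu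
  have hm := mm_pos hu hv
  calc a u * b u ≤ (C * mm u v ^ (ε / 2) * a v) * (D * mm u v ^ (ε / 2) * b v) :=
        mul_le_mul (h1 u v hu hv) (h2 u v hu hv) (by positivity) (by positivity)
    _ = C * D * (mm u v ^ (ε / 2) * mm u v ^ (ε / 2)) * (a v * b v) := by ring
    _ = _ := by rw [← Real.rpow_add hm, add_halves]

lemma Pot.inv {b : ℝ → ℝ} (hb : Pot b) : Pot (fun t => (b t)⁻¹) := by
  refine ⟨fun t ht => inv_pos.2 (hb.pos t ht), fun ε hε => ?_⟩
  obtain ⟨C, hC, h1⟩ := hb.pot ε hε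
  refine ⟨C, hC, fun u v hu hv => ?_⟩
  have h := h1 v u hv hu
  have := hb.pos v hv
  have := hb.pos u hu
  rw [mm_comm] at h
  rw [← div_eq_mul_inv, le_div_iff₀ (by assumption), inv_mul_le_iff₀ (by assumption)]
  linarith

lemma Pot.div {a b : ℝ → ℝ} (ha : Pot a) (hb : Pot b) : Pot (fun t => a t / b t) := by
  simpa only [div_eq_mul_inv] using ha.mul hb.inv

lemma Pot.rpow {b : ℝ → ℝ} (hb : Pot b) {s : ℝ} (hs : 0 < s) : Pot (fun t => b t ^ s) := by
  refine ⟨fun t ht => Real.rpow_pos_of_pos (hb.pos t ht) _, fun ε hε => ?_⟩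
  obtain ⟨C, hC, h1⟩ := hb.pot (ε / s) (by positivity)
  refine ⟨C ^ s, Real.one_le_rpow hC hs.le, fun u v hu hv => ?_⟩
  have := hb.pos v hv
  have := hb.pos u hu
  have hm := mm_pos hu hv
  calc b u ^ s ≤ (C * mm u v ^ (ε / s) * b v) ^ s :=
        Real.rpow_le_rpow (by positivity) (h1 u v hu hv) hs.le
    _ = _ := by
      rw [Real.mul_rpow (by positivity) (by positivity), Real.mul_rpow (by positivity)
        (by positivity), ← Real.rpow_mul hm.le, div_mul_cancel₀ _ hs.ne']

/-- Two-sided growth control for `ρ`. -/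
structure Grow (ρ : ℝ → ℝ) (δ : ℝ) : Prop where
  pos : ∀ t, 0 < t → 0 < ρ t
  upper : ∃ C : ℝ, 1 ≤ C ∧ ∀ u v : ℝ, 0 < u → 0 < v → mm (ρ u) (ρ v) ≤ C * mm u v ^ (2:ℝ)
  lower : ∃ C : ℝ, 1 ≤ C ∧ ∀ u v : ℝ, 0 < u → u ≤ v → (v / u) ^ δ * ρ u ≤ C * ρ v

lemma Pot.comp {a ρ : ℝ → ℝ} {δ : ℝ} (ha : Pot a) (hρ : Grow ρ δ) : Pot (fun t => a (ρ t)) := by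
  refine ⟨fun t ht => ha.pos _ (hρ.pos t ht), fun ε hε => ?_⟩
  obtain ⟨C, hC, h1⟩ := ha.pot (ε / 2) (by positivity)
  obtain ⟨D, hD, h2⟩ := hρ.upper
  refine ⟨C * D ^ (ε / 2), one_le_mul_of_one_le_of_one_le hC
    (Real.one_le_rpow hD (by positivity)), fun u v hu hv => ?_⟩
  have := ha.pos _ (hρ.pos v hv)
  have hm := mm_pos hu hv
  have hm' := mm_pos (hρ.pos u hu) (hρ.pos v hv)
  calc a (ρ u) ≤ C * mm (ρ u) (ρ v) ^ (ε / 2) * a (ρ v) := h1 _ _ (hρ.pos u hu) (hρ.pos v hv)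
    _ ≤ C * (D * mm u v ^ (2:ℝ)) ^ (ε / 2) * a (ρ v) := by
      have := h2 u v hu hv
      gcongr
    _ = _ := by
      rw [Real.mul_rpow (by positivity) (by positivity), ← Real.rpow_mul hm.le,
        mul_div_cancel₀ _ (two_ne_zero)]
      ring

lemma div_rpow_le_mm {u v α : ℝ} (hu : 0 < u) (hv : 0 < v) : (u / v) ^ α ≤ mm u v ^ |α| := by
  rcases le_total 0 α with h | h
  · rw [abs_of_nonneg h]
    exact Real.rpow_le_rpow (by positivity) (le_max_left _ _) h
  · rw [abs_of_nonpos h, ← inv_div, Real.inv_rpow (by positivity), ← Real.rpow_neg (by positivity)]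
    exact Real.rpow_le_rpow (by positivity) (le_max_right _ _) (by linarith)

lemma Pot.grow {c : ℝ → ℝ} (hc : Pot c) {α : ℝ} (h0 : 0 < α) (h1 : α < 1) :
    Grow (fun t => t ^ α * c t) (α / 2) := by
  refine ⟨fun t ht => mul_pos (Real.rpow_pos_of_pos ht _) (hc.pos t ht), ?_, ?_⟩
  · obtain ⟨C, hC, h⟩ := hc.pot 1 one_pos
    refine ⟨C, hC, ?_⟩
    have key : ∀ u v : ℝ, 0 < u → 0 < v → u ^ α * c u ≤ C * mm u v ^ (2:ℝ) * (v ^ α * c v) := by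
      intro u v hu hv
      have hm := one_le_mm hu hv
      have := hc.pos u hu
      have := hc.pos v hv
      have e1 : u ^ α ≤ mm u v ^ (1:ℝ) * v ^ α := by
        have : (u / v) ^ α ≤ mm u v ^ (1:ℝ) := (div_rpow_le_mm hu hv).trans
          (Real.rpow_le_rpow_of_exponent_le hm (by rw [abs_of_pos h0]; exact h1.le))
        rwa [Real.div_rpow hu.le hv.le, div_le_iff₀ (by positivity)] at this
      calc u ^ α * c u ≤ (mm u v ^ (1:ℝ) * v ^ α) * (C * mm u v ^ (1:ℝ) * c v) :=
            mul_le_mul e1 (h u v hu hv) (by positivity) (by positivity)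
        _ = C * (mm u v ^ (1:ℝ) * mm u v ^ (1:ℝ)) * (v ^ α * c v) := by ring
        _ = _ := by rw [← Real.rpow_add (by positivity)]; norm_num
    intro u v hu hv
    rw [mm_le_iff (mul_pos (Real.rpow_pos_of_pos hu _) (hc.pos u hu))
      (mul_pos (Real.rpow_pos_of_pos hv _) (hc.pos v hv))]
    refine ⟨key u v hu hv, ?_⟩
    rw [mm_comm]
    exact key v u hv hu
  · obtain ⟨C, hC, h⟩ := hc.pot (α / 2) (by positivity)
    refine ⟨C, hC, fun u v hu huv => ?_⟩
    have hv := hu.trans_le huv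
    have := hc.pos u hu
    have := hc.pos v hv
    have h := h u v hu hv
    rw [mm_of_le hu huv] at h
    calc (v / u) ^ (α / 2) * (u ^ α * c u) ≤ 
          (v / u) ^ (α / 2) * (u ^ α * (C * (v / u) ^ (α / 2) * c v)) := by gcongr
      _ = C * (((v / u) ^ (α / 2) * (v / u) ^ (α / 2)) * u ^ α * c v) := by ring
      _ = _ := by
        rw [← Real.rpow_add (by positivity), add_halves, Real.div_rpow hv.le hu.le,
          div_mul_cancel₀ _ (by positivity)]

/-! ### The quasi-norms -/

lemma LqNorm_mono {q : ℝ≥0∞} {s : Set ℝ} (hs : MeasurableSet s) {g h : ℝ → ℝ≥0∞}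
    (hgh : ∀ u ∈ s, g u ≤ h u) : LqNorm q s g ≤ LqNorm q s h := by
  unfold LqNorm
  split_ifs
  · exact essSup_mono_ae (ae_restrict_of_forall_mem hs hgh)
  · refine ENNReal.rpow_le_rpow ?_ ENNReal.toReal_nonneg
    exact setLIntegral_mono' hs fun u hu =>
      ENNReal.rpow_le_rpow (hgh u hu) ENNReal.toReal_nonneg

lemma LqNorm_congr {q : ℝ≥0∞} {s : Set ℝ} (hs : MeasurableSet s) {g h : ℝ → ℝ≥0∞}
    (hgh : ∀ u ∈ s, g u = h u) : LqNorm q s g = LqNorm q s h :=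
  le_antisymm (LqNorm_mono hs fun u hu => (hgh u hu).le)
    (LqNorm_mono hs fun u hu => (hgh u hu).ge)

lemma LqNorm_mono_set {q : ℝ≥0∞} {s t : Set ℝ} (hst : s ⊆ t) (g : ℝ → ℝ≥0∞) :
    LqNorm q s g ≤ LqNorm q t g := by
  unfold LqNorm
  split_ifs
  · exact essSup_mono_measure (Measure.absolutelyContinuous_of_le
      (Measure.restrict_mono hst le_rfl))
  · exact ENNReal.rpow_le_rpow (lintegral_mono_set hst) ENNReal.toReal_nonneg

lemma LqNorm_const_mul {q : ℝ≥0∞} (hq : 0 < q) {s : Set ℝ} {c : ℝ≥0∞} (hc : c ≠ ∞)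
    (g : ℝ → ℝ≥0∞) : LqNorm q s (fun u => c * g u) = c * LqNorm q s g := by
  unfold LqNorm
  split_ifs with h
  · exact ENNReal.essSup_const_mul
  · have hp : 0 < q.toReal := ENNReal.toReal_pos hq.ne' h
    simp_rw [ENNReal.mul_rpow_of_nonneg _ _ hp.le]
    rw [lintegral_const_mul' _ _ (ENNReal.rpow_ne_top_of_nonneg hp.le hc),
      ENNReal.mul_rpow_of_nonneg _ _ ENNReal.toReal_nonneg, ← ENNReal.rpow_mul,
      ENNReal.toReal_inv, mul_inv_cancel₀ hp.ne', ENNReal.rpow_one]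

lemma one_le_two_rpow_inv (q : ℝ≥0∞) : (1:ℝ≥0∞) ≤ 2 ^ q⁻¹.toReal := by
  rcases (ENNReal.toReal_nonneg (a := q⁻¹)).eq_or_lt with h | h
  · rw [← h]; simp
  · exact ENNReal.one_le_rpow one_le_two h

lemma LqNorm_union {q : ℝ≥0∞} : ∃ C : ℝ≥0∞, C ≠ ∞ ∧ 1 ≤ C ∧ ∀ (s t : Set ℝ) (g : ℝ → ℝ≥0∞),
    LqNorm q (s ∪ t) g ≤ C * (LqNorm q s g + LqNorm q t g) := by
  refine ⟨2 ^ q⁻¹.toReal, ENNReal.rpow_ne_top_of_nonneg ENNReal.toReal_nonneg (by simp),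
    one_le_two_rpow_inv q, fun s t g => ?_⟩
  unfold LqNorm
  split_ifs with h
  · subst h
    simp only [ENNReal.inv_top, ENNReal.toReal_zero, ENNReal.rpow_zero, one_mul]
    refine essSup_le_of_ae_le _ ?_
    rw [Filter.EventuallyLE, ae_restrict_union_iff]
    constructor
    · filter_upwards [_root_.ae_le_essSup (f := g) (μ := volume.restrict s)] with x hx
      exact hx.trans le_self_add
    · filter_upwards [_root_.ae_le_essSup (f := g) (μ := volume.restrict t)] with x hx
      exact hx.trans le_add_self
  · have hp : 0 ≤ q⁻¹.toReal := ENNReal.toReal_nonneg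
    have h1 := lintegral_union_le (μ := volume) (fun u => g u ^ q.toReal) s t
    set A := ∫⁻ u in s, g u ^ q.toReal
    set B := ∫⁻ u in t, g u ^ q.toReal
    calc _ ≤ (A + B) ^ q⁻¹.toReal := ENNReal.rpow_le_rpow h1 hp
      _ ≤ (2 * max A B) ^ q⁻¹.toReal := by
        refine ENNReal.rpow_le_rpow ?_ hp
        rw [two_mul]
        exact add_le_add (le_max_left _ _) (le_max_right _ _)
      _ = 2 ^ q⁻¹.toReal * (max A B) ^ q⁻¹.toReal := ENNReal.mul_rpow_of_nonneg _ _ hp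
      _ ≤ _ := by
        gcongr
        rcases le_total A B with h | h
        · rw [max_eq_right h]; exact le_add_self
        · rw [max_eq_left h]; exact le_self_add

def Ls (q : ℝ≥0∞) (s : Set ℝ) (G : ℝ → ℝ≥0∞) : ℝ≥0∞ :=
  LqNorm q s (fun u => ENNReal.ofReal (u ^ (-(q⁻¹.toReal))) * G u)

lemma Ls_mono {q : ℝ≥0∞} {s : Set ℝ} (hs : MeasurableSet s) {g h : ℝ → ℝ≥0∞}
    (hgh : ∀ u ∈ s, g u ≤ h u) : Ls q s g ≤ Ls q s h :=
  LqNorm_mono hs fun u hu => mul_le_mul_right (hgh u hu) _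

lemma Ls_mono_set {q : ℝ≥0∞} {s t : Set ℝ} (hst : s ⊆ t) (g : ℝ → ℝ≥0∞) :
    Ls q s g ≤ Ls q t g := LqNorm_mono_set hst _

lemma Ls_const_mul {q : ℝ≥0∞} (hq : 0 < q) {s : Set ℝ} {c : ℝ≥0∞} (hc : c ≠ ∞)
    (g : ℝ → ℝ≥0∞) : Ls q s (fun u => c * g u) = c * Ls q s g := by
  unfold Ls
  rw [← LqNorm_const_mul hq hc]
  congr 1; ext u; ring

lemma Ls_union {q : ℝ≥0∞} : ∃ C : ℝ≥0∞, C ≠ ∞ ∧ 1 ≤ C ∧ ∀ (s t : Set ℝ) (g : ℝ → ℝ≥0∞),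
    Ls q (s ∪ t) g ≤ C * (Ls q s g + Ls q t g) := by
  obtain ⟨C, h, h', h''⟩ := LqNorm_union (q := q)
  exact ⟨C, h, h', fun s t g => h'' s t _⟩

lemma Ls_le_mul {q : ℝ≥0∞} (hq : 0 < q) {s : Set ℝ} (hs : MeasurableSet s) {c : ℝ≥0∞} (hc : c ≠ ∞)
    {g h : ℝ → ℝ≥0∞} (hgh : ∀ u ∈ s, g u ≤ c * h u) : Ls q s g ≤ c * Ls q s h := by
  rw [← Ls_const_mul hq hc]
  exact Ls_mono hs hgh

lemma mul_le_Ls {q : ℝ≥0∞} (hq : 0 < q) {s : Set ℝ} (hs : MeasurableSet s) {c : ℝ≥0∞}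
    {g h : ℝ → ℝ≥0∞} (hgh : ∀ u ∈ s, c * g u ≤ h u) : c * Ls q s g ≤ Ls q s h := by
  by_cases hc : c = ∞
  · subst hc
    rw [← ENNReal.iSup_natCast, ENNReal.iSup_mul]
    refine iSup_le fun n => ?_
    rw [← Ls_const_mul hq (ENNReal.natCast_ne_top n)]
    refine Ls_mono hs fun u hu => le_trans ?_ (hgh u hu)
    gcongr
    exact le_top
  · rw [← Ls_const_mul hq hc]
    exact Ls_mono hs hgh

lemma Ls_top (s : Set ℝ) (G : ℝ → ℝ≥0∞) : Ls ∞ s G = essSup G (volume.restrict s) := by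
  simp [Ls, LqNorm]

lemma Ls_of_ne_top {q : ℝ≥0∞} (hq : 0 < q) (h : q ≠ ∞) {s : Set ℝ} (hs : MeasurableSet s)
    (hs0 : s ⊆ Ioi 0) (G : ℝ → ℝ≥0∞) :
    Ls q s G = (∫⁻ u in s, ENNReal.ofReal (u⁻¹) * G u ^ q.toReal) ^ q⁻¹.toReal := by
  have hp : 0 < q.toReal := ENNReal.toReal_pos hq.ne' h
  rw [Ls, LqNorm, if_neg h]
  congr 1
  refine setLIntegral_congr_fun hs fun u hu => ?_
  have hu0 : 0 < u := hs0 hu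
  rw [ENNReal.mul_rpow_of_nonneg _ _ hp.le, ENNReal.ofReal_rpow_of_pos (by positivity),
    ← Real.rpow_mul hu0.le, ENNReal.toReal_inv, neg_mul, inv_mul_cancel₀ hp.ne', Real.rpow_neg_one]

lemma lint_left {γ t : ℝ} (hγ : 0 < γ) (ht : 0 < t) :
    ∫⁻ u in Ioo 0 t, ENNReal.ofReal (u⁻¹ * (u / t) ^ γ) ≤ ENNReal.ofReal γ⁻¹ := by
  have hi : IntervalIntegrable (fun u : ℝ => u ^ (γ - 1)) volume 0 t :=
    intervalIntegral.intervalIntegrable_rpow' (by linarith)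
  have hi2 : IntegrableOn (fun u : ℝ => u ^ (γ - 1)) (Ioc 0 t) volume :=
    (intervalIntegrable_iff_integrableOn_Ioc_of_le ht.le).1 hi
  have e : ∀ u ∈ Ioc 0 t, u⁻¹ * (u / t) ^ γ = t ^ (-γ) * u ^ (γ - 1) := by
    intro u hu
    have hu0 : 0 < u := hu.1
    rw [Real.div_rpow hu0.le ht.le, Real.rpow_sub_one hu0.ne', Real.rpow_neg ht.le]
    field_simp
  calc _ ≤ ∫⁻ u in Ioc 0 t, ENNReal.ofReal (u⁻¹ * (u / t) ^ γ) :=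
        lintegral_mono_set Ioo_subset_Ioc_self
    _ = ∫⁻ u in Ioc 0 t, ENNReal.ofReal (t ^ (-γ) * u ^ (γ - 1)) :=
        setLIntegral_congr_fun measurableSet_Ioc fun u hu => by simp only [e u hu]
    _ = ENNReal.ofReal (∫ u in Ioc 0 t, t ^ (-γ) * u ^ (γ - 1)) := by
        rw [ofReal_integral_eq_lintegral_ofReal (hi2.const_mul _)]
        filter_upwards [ae_restrict_mem measurableSet_Ioc] with u hu
        have hu0 : 0 < u := hu.1
        simp only [Pi.zero_apply]
        positivity
    _ ≤ _ := by
        apply ENNReal.ofReal_le_ofReal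
        rw [integral_const_mul, ← intervalIntegral.integral_of_le ht.le,
          integral_rpow (Or.inl (by linarith)), sub_add_cancel, Real.zero_rpow hγ.ne', sub_zero,
          Real.rpow_neg ht.le]
        apply le_of_eq
        field_simp

lemma lint_right {γ t : ℝ} (hγ : 0 < γ) (ht : 0 < t) :
    ∫⁻ u in Ioi t, ENNReal.ofReal (u⁻¹ * (u / t) ^ (-γ)) ≤ ENNReal.ofReal γ⁻¹ := by
  have hi2 : IntegrableOn (fun u : ℝ => u ^ (-γ - 1)) (Ioi t) volume :=
    integrableOn_Ioi_rpow_of_lt (by linarith) ht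
  have e : ∀ u ∈ Ioi t, u⁻¹ * (u / t) ^ (-γ) = t ^ γ * u ^ (-γ - 1) := by
    intro u hu
    have hu0 : 0 < u := ht.trans hu
    rw [Real.div_rpow hu0.le ht.le, Real.rpow_sub_one hu0.ne', Real.rpow_neg ht.le]
    field_simp
  calc _ = ∫⁻ u in Ioi t, ENNReal.ofReal (t ^ γ * u ^ (-γ - 1)) :=
        setLIntegral_congr_fun measurableSet_Ioi fun u hu => by simp only [e u hu]
    _ = ENNReal.ofReal (∫ u in Ioi t, t ^ γ * u ^ (-γ - 1)) := by
        rw [ofReal_integral_eq_lintegral_ofReal (hi2.const_mul _)]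
        filter_upwards [ae_restrict_mem measurableSet_Ioi] with u hu
        have hu0 : 0 < u := ht.trans hu
        simp only [Pi.zero_apply]
        positivity
    _ ≤ _ := by
        apply ENNReal.ofReal_le_ofReal
        rw [integral_const_mul, integral_Ioi_rpow_of_lt (by linarith) ht, sub_add_cancel,
          Real.rpow_neg ht.le]
        apply le_of_eq
        field_simp

lemma hardy_aux {q : ℝ≥0∞} (hq : 0 < q) {γ : ℝ} (I : ℝ → Set ℝ) (hI : ∀ t, MeasurableSet (I t))
    (hI0 : ∀ t, 0 < t → I t ⊆ Ioi 0) (h1 : ∀ t, 0 < t → ∀ u ∈ I t, (u / t) ^ γ ≤ 1)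
    (h2 : ∀ p : ℝ, 0 < p → ∃ D : ℝ≥0∞, D ≠ ∞ ∧ ∀ t : ℝ, 0 < t →
      ∫⁻ u in I t, ENNReal.ofReal (u⁻¹ * (u / t) ^ (γ * p)) ≤ D) :
    ∃ C : ℝ≥0∞, C ≠ ∞ ∧ 1 ≤ C ∧ ∀ (t : ℝ) (M : ℝ≥0∞) (G : ℝ → ℝ≥0∞), 0 < t →
      (∀ u ∈ I t, G u ≤ M * ENNReal.ofReal ((u / t) ^ γ)) → Ls q (I t) G ≤ C * M := by
  suffices h : ∃ C : ℝ≥0∞, C ≠ ∞ ∧ ∀ (t : ℝ), 0 < t →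
      Ls q (I t) (fun u => ENNReal.ofReal ((u / t) ^ γ)) ≤ C by
    obtain ⟨C, hC, h⟩ := h
    refine ⟨max 1 C, by simp [hC], le_max_left _ _, fun t M G ht hG => ?_⟩
    by_cases hM : M = ∞
    · subst hM
      rw [ENNReal.mul_top (by positivity)]
      exact le_top
    · calc _ ≤ M * _ := Ls_le_mul hq (hI t) hM hG
        _ ≤ M * C := by gcongr; exact h t ht
        _ ≤ _ := by rw [mul_comm]; gcongr; exact le_max_right _ _
  by_cases h : q = ∞
  · subst h
    refine ⟨1, by simp, fun t ht => ?_⟩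
    rw [Ls_top]
    refine essSup_le_of_ae_le _ (ae_restrict_of_forall_mem (hI t) fun u hu => ?_)
    simpa using ENNReal.ofReal_le_ofReal (h1 t ht u hu)
  · have hp : 0 < q.toReal := ENNReal.toReal_pos hq.ne' h
    obtain ⟨D, hD, h2⟩ := h2 _ hp
    refine ⟨D ^ q⁻¹.toReal, ENNReal.rpow_ne_top_of_nonneg ENNReal.toReal_nonneg hD, fun t ht => ?_⟩
    rw [Ls_of_ne_top hq h (hI t) (hI0 t ht)]
    refine ENNReal.rpow_le_rpow (le_trans (le_of_eq ?_) (h2 t ht)) ENNReal.toReal_nonneg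
    refine setLIntegral_congr_fun (hI t) fun u hu => ?_
    have hu0 : 0 < u := hI0 t ht hu
    rw [ENNReal.ofReal_rpow_of_pos (by positivity), ← ENNReal.ofReal_mul (by positivity),
      ← Real.rpow_mul (by positivity)]

lemma hardy_left {q : ℝ≥0∞} (hq : 0 < q) {γ : ℝ} (hγ : 0 < γ) :
    ∃ C : ℝ≥0∞, C ≠ ∞ ∧ 1 ≤ C ∧ ∀ (t : ℝ) (M : ℝ≥0∞) (G : ℝ → ℝ≥0∞), 0 < t →
      (∀ u ∈ Ioo 0 t, G u ≤ M * ENNReal.ofReal ((u / t) ^ γ)) → Ls q (Ioo 0 t) G ≤ C * M := by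
  refine hardy_aux hq (fun t => Ioo 0 t) (fun t => measurableSet_Ioo) (fun t ht u hu => hu.1) ?_ ?_
  · intro t ht u hu
    have := hu.1
    exact Real.rpow_le_one (by positivity) ((div_le_one ht).2 hu.2.le) hγ.le
  · intro p hp
    exact ⟨_, ENNReal.ofReal_ne_top, fun t ht => lint_left (by positivity) ht⟩

lemma hardy_right {q : ℝ≥0∞} (hq : 0 < q) {γ : ℝ} (hγ : 0 < γ) :
    ∃ C : ℝ≥0∞, C ≠ ∞ ∧ 1 ≤ C ∧ ∀ (t : ℝ) (M : ℝ≥0∞) (G : ℝ → ℝ≥0∞), 0 < t →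
      (∀ u ∈ Ioi t, G u ≤ M * ENNReal.ofReal ((u / t) ^ (-γ))) → Ls q (Ioi t) G ≤ C * M := by
  refine hardy_aux hq (fun t => Ioi t) (fun t => measurableSet_Ioi)
    (fun t ht u hu => ht.trans hu) ?_ ?_
  · intro t ht u hu
    exact Real.rpow_le_one_of_one_le_of_nonpos ((one_le_div ht).2 (le_of_lt hu)) (by linarith)
  · intro p hp
    refine ⟨ENNReal.ofReal (γ * p)⁻¹, ENNReal.ofReal_ne_top, fun t ht => ?_⟩
    rw [neg_mul]
    exact lint_right (by positivity) ht

lemma Ls_low {q : ℝ≥0∞} (hq : 0 < q) :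
    ∃ C : ℝ≥0∞, C ≠ ∞ ∧ 1 ≤ C ∧ ∀ (t : ℝ) (M : ℝ≥0∞) (G : ℝ → ℝ≥0∞), 0 < t →
      (∀ u ∈ Ioo t (2 * t), M ≤ G u) → M ≤ C * Ls q (Ioo t (2 * t)) G := by
  have hI0 : ∀ t : ℝ, 0 < t → Ioo t (2 * t) ⊆ Ioi 0 := fun t ht u hu => ht.trans hu.1
  refine ⟨2 ^ q⁻¹.toReal, ENNReal.rpow_ne_top_of_nonneg ENNReal.toReal_nonneg (by simp),
    one_le_two_rpow_inv q, fun t M G ht hG => ?_⟩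
  have hvol : volume (Ioo t (2 * t)) = ENNReal.ofReal t := by
    rw [Real.volume_Ioo]; congr 1; ring
  by_cases h : q = ∞
  · subst h
    rw [Ls_top]
    simp only [ENNReal.inv_top, ENNReal.toReal_zero, ENNReal.rpow_zero, one_mul]
    have : essSup (fun _ : ℝ => M) (volume.restrict (Ioo t (2 * t))) = M := by
      apply essSup_const
      rw [Ne, Measure.restrict_eq_zero, hvol]
      simpa using ht
    rw [← this]
    exact essSup_mono_ae (ae_restrict_of_forall_mem measurableSet_Ioo hG)
  · have hp : 0 < q.toReal := ENNReal.toReal_pos hq.ne' h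
    rw [Ls_of_ne_top hq h measurableSet_Ioo (hI0 t ht), ← ENNReal.mul_rpow_of_nonneg _ _
      ENNReal.toReal_nonneg]
    have : M ^ q.toReal ≤ 2 * ∫⁻ u in Ioo t (2 * t), ENNReal.ofReal u⁻¹ * G u ^ q.toReal := by
      calc M ^ q.toReal = 2 * ((ENNReal.ofReal (2 * t)⁻¹ * M ^ q.toReal) * ENNReal.ofReal t) := by
            rw [show (2:ℝ≥0∞) = ENNReal.ofReal 2 by simp, mul_right_comm,
              ← ENNReal.ofReal_mul (by positivity), ← mul_assoc, ← ENNReal.ofReal_mul (by positivity)]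
            have : 2 * ((2 * t)⁻¹ * t) = 1 := by field_simp
            rw [this]; simp
        _ = 2 * ∫⁻ u in Ioo t (2 * t), ENNReal.ofReal (2 * t)⁻¹ * M ^ q.toReal := by
            rw [setLIntegral_const, hvol]
        _ ≤ _ := by
            gcongr 2 * ?_
            refine setLIntegral_mono' measurableSet_Ioo fun u hu => ?_
            have hu0 : 0 < u := hI0 t ht hu
            gcongr
            · exact hu.2.le
            · exact hG u hu
    calc M = (M ^ q.toReal) ^ q⁻¹.toReal := by
          rw [← ENNReal.rpow_mul, ENNReal.toReal_inv, mul_inv_cancel₀ hp.ne', ENNReal.rpow_one]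
      _ ≤ _ := ENNReal.rpow_le_rpow this ENNReal.toReal_nonneg

/-! ### Tails and heads of slowly varying weights -/

lemma Ls_Ici (q : ℝ≥0∞) (t : ℝ) (G : ℝ → ℝ≥0∞) : Ls q (Ici t) G = Ls q (Ioi t) G := by
  unfold Ls LqNorm
  rw [Measure.restrict_congr_set (Ioi_ae_eq_Ici (μ := volume) (a := t))]

lemma Ls_split {q : ℝ≥0∞} : ∃ C : ℝ≥0∞, C ≠ ∞ ∧ 1 ≤ C ∧ ∀ (s : Set ℝ) (t : ℝ) (g : ℝ → ℝ≥0∞),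
    s ⊆ Ioi 0 → Ls q s g ≤ C * (Ls q (Ioo 0 t) g + Ls q (Ioi t) g) := by
  obtain ⟨C, h, h', h''⟩ := Ls_union (q := q)
  refine ⟨C, h, h', fun s t g hs => ?_⟩
  rw [← Ls_Ici]
  refine le_trans (Ls_mono_set ?_ g) (h'' _ _ _)
  intro u hu
  rcases lt_or_ge u t with h | h
  · exact Or.inl ⟨hs hu, h⟩
  · exact Or.inr h

lemma pow_bd_left {a : ℝ → ℝ} {C δ : ℝ}
    (h : ∀ u v : ℝ, 0 < u → 0 < v → a u ≤ C * mm u v ^ δ * a v) (σ : ℝ) {u t : ℝ}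
    (hu : 0 < u) (hut : u ≤ t) :
    u ^ σ * a u ≤ C * (t ^ σ * a t) * (u / t) ^ (σ - δ) := by
  have ht := hu.trans_le hut
  have h1 := h u t hu ht
  rw [mm_of_le hu hut] at h1
  calc u ^ σ * a u ≤ u ^ σ * (C * (t / u) ^ δ * a t) := by gcongr
    _ = C * (t ^ σ * a t) * (u / t) ^ (σ - δ) := by
      rw [Real.rpow_sub (by positivity), Real.div_rpow hu.le ht.le, Real.div_rpow hu.le ht.le,
        Real.div_rpow ht.le hu.le]
      field_simp

lemma pow_bd_right {a : ℝ → ℝ} {C δ : ℝ}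
    (h : ∀ u v : ℝ, 0 < u → 0 < v → a u ≤ C * mm u v ^ δ * a v) (σ : ℝ) {u t : ℝ}
    (ht : 0 < t) (hut : t ≤ u) :
    u ^ σ * a u ≤ C * (t ^ σ * a t) * (u / t) ^ (σ + δ) := by
  have hu := ht.trans_le hut
  have h1 := h u t hu ht
  rw [mm_comm, mm_of_le ht hut] at h1
  calc u ^ σ * a u ≤ u ^ σ * (C * (u / t) ^ δ * a t) := by gcongr
    _ = C * (t ^ σ * a t) * (u / t) ^ (σ + δ) := by
      rw [Real.rpow_add (by positivity), Real.div_rpow hu.le ht.le, Real.div_rpow hu.le ht.le]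
      field_simp

lemma Pot.pow_mm {a : ℝ → ℝ} (ha : Pot a) (σ : ℝ) {ε : ℝ} (hε : 0 < ε) :
    ∃ D : ℝ, 1 ≤ D ∧ ∀ u v : ℝ, 0 < u → 0 < v →
      u ^ σ * a u ≤ D * mm u v ^ (|σ| + ε) * (v ^ σ * a v) := by
  obtain ⟨C, hC, h⟩ := ha.pot ε hε
  refine ⟨C, hC, fun u v hu hv => ?_⟩
  have := ha.pos u hu
  have := ha.pos v hv
  have hm := mm_pos hu hv
  have e1 : u ^ σ ≤ mm u v ^ |σ| * v ^ σ := by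
    have := div_rpow_le_mm (α := σ) hu hv
    rwa [Real.div_rpow hu.le hv.le, div_le_iff₀ (by positivity)] at this
  calc u ^ σ * a u ≤ (mm u v ^ |σ| * v ^ σ) * (C * mm u v ^ ε * a v) :=
        mul_le_mul e1 (h u v hu hv) (by positivity) (by positivity)
    _ = _ := by rw [Real.rpow_add hm]; ring

lemma Pot.pow_double {a : ℝ → ℝ} (ha : Pot a) (σ : ℝ) :
    ∃ D : ℝ, 1 ≤ D ∧ ∀ u v : ℝ, 0 < u → 0 < v → mm u v ≤ 2 →
      u ^ σ * a u ≤ D * (v ^ σ * a v) := by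
  obtain ⟨C, hC, h⟩ := ha.pow_mm σ one_pos
  have h2 : 1 ≤ (2:ℝ) ^ (|σ| + 1) := Real.one_le_rpow one_le_two (by positivity)
  refine ⟨C * 2 ^ (|σ| + 1), one_le_mul_of_one_le_of_one_le hC h2, fun u v hu hv huv => ?_⟩
  refine (h u v hu hv).trans ?_
  have := ha.pos v hv
  have hm := mm_pos hu hv
  gcongr

lemma tail_low {b : ℝ → ℝ} (hb : Pot b) {r : ℝ≥0∞} (hr : 0 < r) :
    ∃ C : ℝ≥0∞, C ≠ ∞ ∧ 1 ≤ C ∧ ∀ t : ℝ, 0 < t → 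
      ENNReal.ofReal (b t) ≤ C * Ls r (Ioo t (2 * t)) (fun s => ENNReal.ofReal (b s)) ∧
      ENNReal.ofReal (b (2 * t)) ≤ C * Ls r (Ioo t (2 * t)) (fun s => ENNReal.ofReal (b s)) := by
  obtain ⟨D, hD, h⟩ := hb.pow_double 0
  obtain ⟨C, hC, hC1, h2⟩ := Ls_low hr
  have h1D : (1:ℝ≥0∞) ≤ ENNReal.ofReal D := by simpa using hD
  refine ⟨C * ENNReal.ofReal D, ENNReal.mul_ne_top hC ENNReal.ofReal_ne_top,
    one_le_mul_of_one_le_of_one_le hC1 h1D, fun t ht => ?_⟩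
  rw [mul_assoc, ← Ls_const_mul hr ENNReal.ofReal_ne_top]
  constructor
  · refine h2 t _ _ ht fun u hu => ?_
    have hu0 : 0 < u := ht.trans hu.1
    rw [← ENNReal.ofReal_mul (by linarith)]
    apply ENNReal.ofReal_le_ofReal
    have := h t u ht hu0 (by rw [mm_le_iff ht hu0]; constructor <;> linarith [hu.1, hu.2])
    simpa using this
  · refine h2 t _ _ ht fun u hu => ?_
    have hu0 : 0 < u := ht.trans hu.1
    rw [← ENNReal.ofReal_mul (by linarith)]
    apply ENNReal.ofReal_le_ofReal
    have := h (2 * t) u (by positivity) hu0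
      (by rw [mm_le_iff (by positivity) hu0]; constructor <;> linarith [hu.1, hu.2])
    simpa using this

/-- `B` satisfies Potter bounds (extended-valued). -/
def EPot (B : ℝ → ℝ≥0∞) : Prop := ∀ ε : ℝ, 0 < ε → ∃ C : ℝ, 1 ≤ C ∧ ∀ u v : ℝ, 0 < u → 0 < v →
    B u ≤ ENNReal.ofReal (C * mm u v ^ ε) * B v

lemma EPot.ne_top {B : ℝ → ℝ≥0∞} (hB : EPot B) (h1 : B 1 ≠ ∞) {t : ℝ} (ht : 0 < t) : B t ≠ ∞ := by
  obtain ⟨C, -, h⟩ := hB 1 one_pos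
  exact ne_top_of_le_ne_top (ENNReal.mul_ne_top ENNReal.ofReal_ne_top h1) (h t 1 ht one_pos)

lemma EPot.toReal {B : ℝ → ℝ≥0∞} (hB : EPot B) (h1 : B 1 ≠ ∞) (h0 : ∀ t, 0 < t → B t ≠ 0) :
    Pot (fun t => (B t).toReal) := by
  refine ⟨fun t ht => ENNReal.toReal_pos (h0 t ht) (hB.ne_top h1 ht), fun ε hε => ?_⟩
  obtain ⟨C, hC, h⟩ := hB ε hε
  refine ⟨C, hC, fun u v hu hv => ?_⟩
  have hm := mm_pos hu hv
  have := ENNReal.toReal_mono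
    (ENNReal.mul_ne_top ENNReal.ofReal_ne_top (hB.ne_top h1 hv)) (h u v hu hv)
  rwa [ENNReal.toReal_mul, ENNReal.toReal_ofReal (by positivity)] at this

lemma epot_aux {b : ℝ → ℝ} {B : ℝ → ℝ≥0∞} 
    (hlow : ∃ C : ℝ≥0∞, C ≠ ∞ ∧ 1 ≤ C ∧ ∀ t : ℝ, 0 < t → ENNReal.ofReal (b t) ≤ C * B t)
    (key : ∀ ε : ℝ, 0 < ε → ∃ C : ℝ≥0∞, C ≠ ∞ ∧ ∀ u v : ℝ, 0 < u → 0 < v →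
      B v ≤ C * (B u + ENNReal.ofReal ((2 * mm u v) ^ (2 * ε)) * ENNReal.ofReal (b u))) :
    EPot B := by
  intro ε hε
  obtain ⟨C, hC, hC1, h1⟩ := hlow
  obtain ⟨D, hD, h2⟩ := key (ε / 2) (by positivity)
  have hne : D * (1 + ENNReal.ofReal ((2:ℝ) ^ ε) * C) ≠ ∞ :=
    ENNReal.mul_ne_top hD (ENNReal.add_ne_top.2 ⟨by simp,
      ENNReal.mul_ne_top ENNReal.ofReal_ne_top hC⟩)
  refine ⟨max 1 (D * (1 + ENNReal.ofReal ((2:ℝ) ^ ε) * C)).toReal, le_max_left _ _,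
    fun v u hv hu => ?_⟩
  have hm := one_le_mm hu hv
  have hm0 := mm_pos hu hv
  have hme : 1 ≤ mm u v ^ ε := Real.one_le_rpow hm hε.le
  refine (h2 u v hu hv).trans ?_
  rw [mul_div_cancel₀ _ two_ne_zero, Real.mul_rpow (by positivity) (by positivity)]
  calc D * (B u + ENNReal.ofReal (2 ^ ε * mm u v ^ ε) * ENNReal.ofReal (b u))
      ≤ D * (ENNReal.ofReal (mm u v ^ ε) * B u + 
          ENNReal.ofReal (2 ^ ε * mm u v ^ ε) * (C * B u)) := by
        gcongr
        · conv_lhs => rw [← one_mul (B u)]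
          gcongr
          simpa using hme
        · exact h1 u hu
    _ = (D * (1 + ENNReal.ofReal ((2:ℝ) ^ ε) * C)) * ENNReal.ofReal (mm u v ^ ε) * B u := by
        rw [ENNReal.ofReal_mul (by positivity)]; ring
    _ ≤ _ := by
        rw [ENNReal.ofReal_mul (by positivity), mm_comm v u]
        gcongr
        conv_lhs => rw [← ENNReal.ofReal_toReal hne]
        exact ENNReal.ofReal_le_ofReal (le_max_right _ _)

lemma tail_epot {b : ℝ → ℝ} (hb : Pot b) {r : ℝ≥0∞} (hr : 0 < r) :
    EPot (fun t => Ls r (Ioi t) (fun s => ENNReal.ofReal (b s))) := by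
  refine epot_aux (b := b) ?_ ?_
  · obtain ⟨C, hC, hC1, h⟩ := tail_low hb hr
    refine ⟨C, hC, hC1, fun t ht => (h t ht).1.trans ?_⟩
    gcongr
    exact Ls_mono_set (fun u hu => hu.1) _
  · intro ε hε
    obtain ⟨Cb, hCb, hpb⟩ := hb.pot ε hε
    obtain ⟨Cs, hCs, hCs1, hsp⟩ := Ls_split (q := r)
    obtain ⟨Ch, hCh, hCh1, hh⟩ := hardy_left hr hε
    refine ⟨Cs * Ch * (1 + ENNReal.ofReal Cb), ENNReal.mul_ne_top (ENNReal.mul_ne_top hCs hCh)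
      (by simp), fun u v hu hv => ?_⟩
    have hm := one_le_mm hu hv
    have hbu := hb.pos u hu
    have hX : Ls r (Ioo 0 u) ((Ioi v).indicator (fun s => ENNReal.ofReal (b s))) ≤ 
        Ch * (ENNReal.ofReal Cb * (ENNReal.ofReal ((2 * mm u v) ^ (2 * ε)) *
          ENNReal.ofReal (b u))) := by
      refine hh u _ _ hu fun s hs => ?_
      by_cases hsv : s ∈ Ioi v
      · rw [indicator_of_mem hsv]
        rw [← ENNReal.ofReal_mul (by positivity), ← ENNReal.ofReal_mul (by positivity)]
        have hs0 := hs.1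
        rw [← ENNReal.ofReal_mul (by positivity)]
        apply ENNReal.ofReal_le_ofReal
        refine (hpb s u hs.1 hu).trans ?_
        rw [mm_of_le hs.1 hs.2.le]
        have e : u / s ≤ 2 * mm u v := by
          have : u / s ≤ u / v := by gcongr; exact (le_of_lt hsv)
          have : u / v ≤ mm u v := le_max_left _ _
          linarith
        calc Cb * (u / s) ^ ε * b u = Cb * ((u / s) ^ ε * (u / s) ^ ε * b u) * (s / u) ^ ε := by
              have : (s / u) ^ ε * (u / s) ^ ε = 1 := by
                rw [← Real.mul_rpow (by positivity) (by positivity)]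
                rw [div_mul_div_cancel₀ hu.ne', div_self hs0.ne', Real.one_rpow]
              linear_combination (- Cb * (u / s) ^ ε * b u) * this
          _ = Cb * ((u / s) ^ (2 * ε) * b u) * (s / u) ^ ε := by
              rw [two_mul ε, Real.rpow_add (by positivity)]
          _ ≤ _ := by gcongr
      · rw [indicator_of_notMem hsv]; exact zero_le
    calc Ls r (Ioi v) (fun s => ENNReal.ofReal (b s)) 
        ≤ Ls r (Ioi v) ((Ioi v).indicator (fun s => ENNReal.ofReal (b s))) :=
          Ls_mono measurableSet_Ioi fun s hs => by rw [indicator_of_mem hs]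
      _ ≤ Cs * (_ + _) := hsp _ u _ (fun s hs => hv.trans hs)
      _ ≤ Cs * (Ch * (ENNReal.ofReal Cb * (ENNReal.ofReal ((2 * mm u v) ^ (2 * ε)) *
          ENNReal.ofReal (b u))) + Ls r (Ioi u) (fun s => ENNReal.ofReal (b s))) := by
          gcongr
          exact Ls_mono measurableSet_Ioi fun s hs => indicator_le_self _ _ _
      _ ≤ _ := by
          set X := ENNReal.ofReal ((2 * mm u v) ^ (2 * ε)) * ENNReal.ofReal (b u)
          set Y := Ls r (Ioi u) (fun s => ENNReal.ofReal (b s))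
          rw [mul_assoc Cs, mul_assoc Cs]
          gcongr
          calc Ch * (ENNReal.ofReal Cb * X) + Y ≤ Ch * (ENNReal.ofReal Cb * X) + Ch * Y := by
                gcongr
                exact le_mul_of_one_le_left zero_le hCh1
            _ ≤ Ch * (ENNReal.ofReal Cb * X) + Ch * Y + (Ch * X + Ch * ENNReal.ofReal Cb * Y) :=
                le_self_add
            _ = _ := by ring

lemma head_epot {b : ℝ → ℝ} (hb : Pot b) {r : ℝ≥0∞} (hr : 0 < r) :
    EPot (fun t => Ls r (Ioo 0 t) (fun s => ENNReal.ofReal (b s))) := by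
  refine epot_aux (b := b) ?_ ?_
  · obtain ⟨C, hC, hC1, h⟩ := tail_low hb hr
    refine ⟨C, hC, hC1, fun t ht => ?_⟩
    have := (h (t / 2) (by positivity)).2
    rw [mul_div_cancel₀ _ two_ne_zero] at this
    refine this.trans ?_
    gcongr
    exact Ls_mono_set (Ioo_subset_Ioo_left (half_pos ht).le) _
  · intro ε hε
    obtain ⟨Cb, hCb, hpb⟩ := hb.pot ε hε
    obtain ⟨Cs, hCs, hCs1, hsp⟩ := Ls_split (q := r)
    obtain ⟨Ch, hCh, hCh1, hh⟩ := hardy_right hr hε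
    refine ⟨Cs * Ch * (1 + ENNReal.ofReal Cb), ENNReal.mul_ne_top (ENNReal.mul_ne_top hCs hCh)
      (by simp), fun u v hu hv => ?_⟩
    have hm := one_le_mm hu hv
    have hbu := hb.pos u hu
    have hX : Ls r (Ioi u) ((Iio v).indicator (fun s => ENNReal.ofReal (b s))) ≤ 
        Ch * (ENNReal.ofReal Cb * (ENNReal.ofReal ((2 * mm u v) ^ (2 * ε)) *
          ENNReal.ofReal (b u))) := by
      refine hh u _ _ hu fun s hs => ?_
      have hs0 : 0 < s := hu.trans hs
      by_cases hsv : s ∈ Iio v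
      · rw [indicator_of_mem hsv]
        rw [← ENNReal.ofReal_mul (by positivity), ← ENNReal.ofReal_mul (by positivity)]
        rw [← ENNReal.ofReal_mul (by positivity)]
        apply ENNReal.ofReal_le_ofReal
        refine (hpb s u hs0 hu).trans ?_
        rw [mm_comm, mm_of_le hu (le_of_lt hs)]
        have e : s / u ≤ 2 * mm u v := by
          have : s / u ≤ v / u := by gcongr; exact (le_of_lt hsv)
          have : v / u ≤ mm u v := le_max_right _ _
          linarith
        calc Cb * (s / u) ^ ε * b u = Cb * ((s / u) ^ ε * (s / u) ^ ε * b u) * (s / u) ^ (-ε) := by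
              have : (s / u) ^ ε * (s / u) ^ (-ε) = 1 := by
                rw [← Real.rpow_add (by positivity), add_neg_cancel, Real.rpow_zero]
              linear_combination (- Cb * (s / u) ^ ε * b u) * this
          _ = Cb * ((s / u) ^ (2 * ε) * b u) * (s / u) ^ (-ε) := by
              rw [two_mul ε, Real.rpow_add (by positivity)]
          _ ≤ _ := by gcongr
      · rw [indicator_of_notMem hsv]; exact zero_le
    calc Ls r (Ioo 0 v) (fun s => ENNReal.ofReal (b s)) 
        ≤ Ls r (Ioo 0 v) ((Iio v).indicator (fun s => ENNReal.ofReal (b s))) :=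
          Ls_mono measurableSet_Ioo fun s hs => by
            rw [indicator_of_mem (show s ∈ Iio v from hs.2)]
      _ ≤ Cs * (_ + _) := hsp _ u _ (fun s hs => hs.1)
      _ ≤ Cs * (Ls r (Ioo 0 u) (fun s => ENNReal.ofReal (b s)) + 
           Ch * (ENNReal.ofReal Cb * (ENNReal.ofReal ((2 * mm u v) ^ (2 * ε)) *
          ENNReal.ofReal (b u)))) := by
          gcongr
          exact Ls_mono measurableSet_Ioo fun s hs => indicator_le_self _ _ _
      _ ≤ _ := by
          set X := ENNReal.ofReal ((2 * mm u v) ^ (2 * ε)) * ENNReal.ofReal (b u)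
          set Y := Ls r (Ioo 0 u) (fun s => ENNReal.ofReal (b s))
          rw [mul_assoc Cs, mul_assoc Cs]
          gcongr
          calc Y + Ch * (ENNReal.ofReal Cb * X) ≤ Ch * Y + Ch * (ENNReal.ofReal Cb * X) := by
                gcongr
                exact le_mul_of_one_le_left zero_le hCh1
            _ ≤ Ch * Y + Ch * (ENNReal.ofReal Cb * X) + (Ch * X + Ch * ENNReal.ofReal Cb * Y) :=
                le_self_add
            _ = _ := by ring

/-! ### The K-functional -/

lemma Kf_mono (N₀ N₁ : E → ℝ≥0∞) {u v : ℝ} (huv : u ≤ v) (f : E) :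
    Kf N₀ N₁ u f ≤ Kf N₀ N₁ v f := by
  unfold Kf
  gcongr

lemma Kf_scale (N₀ N₁ : E → ℝ≥0∞) {u v : ℝ} (hu : 0 < u) (huv : u ≤ v) (f : E) :
    Kf N₀ N₁ v f ≤ ENNReal.ofReal (v / u) * Kf N₀ N₁ u f := by
  have hv := hu.trans_le huv
  have h1 : (1:ℝ≥0∞) ≤ ENNReal.ofReal (v / u) := by simpa using (one_le_div hu).2 huv
  unfold Kf
  rw [ENNReal.mul_iInf_of_ne (by positivity) ENNReal.ofReal_ne_top]
  refine le_iInf fun g => (iInf_le _ g).trans ?_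
  rw [mul_add, ← mul_assoc, ← ENNReal.ofReal_mul (by positivity), div_mul_cancel₀ _ hu.ne']
  gcongr
  exact le_mul_of_one_le_left zero_le h1

lemma Kf_mm (N₀ N₁ : E → ℝ≥0∞) {u v : ℝ} (hu : 0 < u) (hv : 0 < v) (f : E) :
    Kf N₀ N₁ u f ≤ ENNReal.ofReal (mm u v) * Kf N₀ N₁ v f := by
  rcases le_total u v with h | h
  · refine (Kf_mono N₀ N₁ h f).trans (le_mul_of_one_le_left zero_le ?_)
    simpa using one_le_mm hu hv
  · rw [mm_comm, mm_of_le hv h]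
    exact Kf_scale N₀ N₁ hv h f

lemma QuasiBanach.neg (A : QuasiBanach E) (x : E) : A.N (-x) = A.N x := by
  have := A.smul (-1) x
  simpa using this

lemma Kf_le_left (A₀ A₁ : QuasiBanach E) (u : ℝ) (f : E) : Kf A₀.N A₁.N u f ≤ A₀.N f := by
  refine (iInf_le _ f).trans ?_
  simp [A₁.zero]

lemma Kf_le_right (A₀ A₁ : QuasiBanach E) (u : ℝ) (f : E) :
    Kf A₀.N A₁.N u f ≤ ENNReal.ofReal u * A₁.N f := by
  refine (iInf_le _ 0).trans ?_
  simp [A₀.zero]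

lemma Kf_neg (A₀ A₁ : QuasiBanach E) (u : ℝ) (f : E) :
    Kf A₀.N A₁.N u (-f) ≤ Kf A₀.N A₁.N u f := by
  refine le_iInf fun g => (iInf_le _ (-g)).trans ?_
  rw [A₀.neg, ← A₁.neg (f - g)]
  apply le_of_eq
  congr 3
  abel

lemma Kf_add (A₀ A₁ : QuasiBanach E) : ∃ C : ℝ≥0∞, C ≠ ∞ ∧ 1 ≤ C ∧ ∀ (u : ℝ) (x y : E),
    Kf A₀.N A₁.N u (x + y) ≤ C * (Kf A₀.N A₁.N u x + Kf A₀.N A₁.N u y) := by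
  obtain ⟨C, hC1, hC, h⟩ := A₀.quasi
  obtain ⟨D, hD1, hD, k⟩ := A₁.quasi
  have hm : max C D ≠ ∞ := by simp [hC, hD]
  refine ⟨max C D, hm, hC1.trans (le_max_left _ _), fun u x y => ?_⟩
  have h0 : max C D ≠ 0 := (lt_of_lt_of_le one_pos (hC1.trans (le_max_left C D))).ne'
  unfold Kf
  rw [ENNReal.iInf_add, ENNReal.mul_iInf_of_ne h0 hm]
  refine le_iInf fun g => ?_
  rw [ENNReal.add_iInf, ENNReal.mul_iInf_of_ne h0 hm]
  refine le_iInf fun g' => (iInf_le _ (g + g')).trans ?_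
  have e : x + y - (g + g') = (x - g) + (y - g') := by abel
  rw [e]
  calc _ ≤ max C D * (A₀.N g + A₀.N g') + 
        ENNReal.ofReal u * (max C D * (A₁.N (x - g) + A₁.N (y - g'))) := by
        gcongr
        · exact (h _ _).trans (by gcongr; exact le_max_left _ _)
        · exact (k _ _).trans (by gcongr; exact le_max_right _ _)
    _ = _ := by ring

lemma of_bd {w k m e : ℝ} {K H : ℝ≥0∞} (hw : 0 ≤ w) (hm : 0 ≤ m) (h : w * k ≤ m * e)
    (hK : K ≤ H * ENNReal.ofReal k) :
    ENNReal.ofReal w * K ≤ H * ENNReal.ofReal m * ENNReal.ofReal e := by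
  calc ENNReal.ofReal w * K ≤ ENNReal.ofReal w * (H * ENNReal.ofReal k) := by gcongr
    _ = H * ENNReal.ofReal (w * k) := by rw [ENNReal.ofReal_mul hw]; ring
    _ ≤ H * ENNReal.ofReal (m * e) := by gcongr
    _ = _ := by rw [ENNReal.ofReal_mul hm]; ring

/-! ### Norm estimates for the endpoint spaces -/

def LL (θ₀ : ℝ) (r q : ℝ≥0∞) (b a : ℝ → ℝ) (κ : ℝ → ℝ≥0∞) : ℝ≥0∞ :=
  Ls r (Ioi 0) fun s => ENNReal.ofReal (b s / a s) *
    Ls q (Ioo 0 s) fun u => ENNReal.ofReal (u ^ (-θ₀) * a u) * κ u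

lemma XL_upper {θ₀ α : ℝ} (hθ₀ : 0 < θ₀) (hα : θ₀ < α) {a b : ℝ → ℝ} (ha : Pot a) (hb : Pot b)
    {r q : ℝ≥0∞} (hr : 0 < r) (hq : 0 < q) :
    ∃ C : ℝ≥0∞, C ≠ ∞ ∧ ∀ (t : ℝ) (κ : ℝ → ℝ≥0∞) (H : ℝ≥0∞), 0 < t → H ≠ ∞ →
      (∀ u, 0 < u → u ≤ t → κ u ≤ H * ENNReal.ofReal ((u / t) ^ α)) →
      (∀ u, t ≤ u → κ u ≤ H) →
      LL θ₀ r q b a κ ≤ C * H * (ENNReal.ofReal (t ^ (-θ₀) * a t) *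
        Ls r (Ioi t) (fun s => ENNReal.ofReal (b s / a s))) := by
  set δ := min ((α - θ₀) / 2) (θ₀ / 2) with hδdef
  have hδ : 0 < δ := lt_min (by linarith) (by linarith)
  have hδ1 : δ ≤ (α - θ₀) / 2 := min_le_left _ _
  have hδ2 : δ ≤ θ₀ / 2 := min_le_right _ _
  set γ := α - θ₀ - δ with hγdef
  have hγ : 0 < γ := by linarith
  obtain ⟨Ca, hCa, hpa⟩ := ha.pot δ hδ
  have hba : Pot (fun s => b s / a s) := hb.div ha
  obtain ⟨Cb, hCb, hpb⟩ := hba.pot (γ / 2) (by linarith)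
  obtain ⟨C1, hC1, -, hh1⟩ := hardy_left hq hγ
  obtain ⟨C2, hC2, -, hh2⟩ := hardy_right hq (show 0 < θ₀ - δ by linarith)
  obtain ⟨C3, hC3, -, hs3⟩ := Ls_split (q := q)
  obtain ⟨C4, hC4, -, hh4⟩ := hardy_left hr (show 0 < γ / 2 by linarith)
  obtain ⟨C5, hC5, -, hs5⟩ := Ls_split (q := r)
  obtain ⟨C6, hC6, -, hl6⟩ := tail_low hba hr
  refine ⟨C5 * (C4 * C1 * ENNReal.ofReal Ca * ENNReal.ofReal Cb * C6 +
    C3 * (C1 + C2) * ENNReal.ofReal Ca), ?_, ?_⟩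
  · simp only [ne_eq, ENNReal.mul_eq_top, ENNReal.add_eq_top, hC1, hC2, hC3, hC4, hC5, hC6,
      ENNReal.ofReal_ne_top]
    tauto
  intro t κ H ht hH hκ1 hκ2
  have hat := ha.pos t ht
  have hbat := hba.pos t ht
  set m := Ca * (t ^ (-θ₀) * a t) with hmdef
  have hm : 0 < m := by positivity
  -- pointwise bound, `u ≤ t`
  have pb1 : ∀ u, 0 < u → u ≤ t → ENNReal.ofReal (u ^ (-θ₀) * a u) * κ u ≤
      H * ENNReal.ofReal m * ENNReal.ofReal ((u / t) ^ γ) := by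
    intro u hu hut
    have := ha.pos u hu
    refine of_bd (by positivity) hm.le ?_ (hκ1 u hu hut)
    calc u ^ (-θ₀) * a u * (u / t) ^ α ≤ m * (u / t) ^ (-θ₀ - δ) * (u / t) ^ α := by
          exact mul_le_mul_of_nonneg_right (pow_bd_left hpa (-θ₀) hu hut) (by positivity)
      _ = m * (u / t) ^ γ := by
          rw [mul_assoc, ← Real.rpow_add (by positivity)]; congr 2; rw [hγdef]; ring
  have pb2 : ∀ u, u ∈ Ioi t → ENNReal.ofReal (u ^ (-θ₀) * a u) * κ u ≤
      H * ENNReal.ofReal m * ENNReal.ofReal ((u / t) ^ (-(θ₀ - δ))) := by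
    intro u hut
    have hu : 0 < u := ht.trans hut
    have := ha.pos u hu
    refine of_bd (k := 1) (by positivity) hm.le ?_ (by simpa using hκ2 u (le_of_lt hut))
    rw [mul_one, show -(θ₀ - δ) = -θ₀ + δ by ring]
    exact pow_bd_right hpa (-θ₀) ht (le_of_lt hut)
  have in1 : ∀ s, 0 < s → s ≤ t → Ls q (Ioo 0 s) (fun u => ENNReal.ofReal (u ^ (-θ₀) * a u) * κ u)
      ≤ C1 * (H * ENNReal.ofReal m) * ENNReal.ofReal ((s / t) ^ γ) := by
    intro s hs hst
    rw [mul_assoc]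
    refine hh1 s _ _ hs fun u hu => (pb1 u hu.1 (hu.2.le.trans hst)).trans (le_of_eq ?_)
    have hu0 := hu.1
    rw [mul_assoc (H * ENNReal.ofReal m), ← ENNReal.ofReal_mul (by positivity),
      ← Real.mul_rpow (by positivity) (by positivity), mul_comm (s / t), div_mul_div_cancel₀ hs.ne']
  have in2 : ∀ s, 0 < s → Ls q (Ioo 0 s) (fun u => ENNReal.ofReal (u ^ (-θ₀) * a u) * κ u)
      ≤ C3 * (C1 + C2) * (H * ENNReal.ofReal m) := by
    intro s hs
    refine (hs3 (Ioo 0 s) t _ (fun u hu => hu.1)).trans ?_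
    rw [mul_assoc, add_mul]
    gcongr
    · exact hh1 t _ _ ht fun u hu => pb1 u hu.1 hu.2.le
    · exact hh2 t _ _ ht pb2
  have out1 : Ls r (Ioo 0 t) (fun s => ENNReal.ofReal (b s / a s) *
      Ls q (Ioo 0 s) fun u => ENNReal.ofReal (u ^ (-θ₀) * a u) * κ u) ≤
      C4 * (C1 * (H * ENNReal.ofReal m) * ENNReal.ofReal (Cb * (b t / a t))) := by
    refine hh4 t _ _ ht fun s hs => ?_
    have hs0 := hs.1
    refine of_bd (hba.pos s hs.1).le (by positivity) ?_ (in1 s hs.1 hs.2.le)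
    have := pow_bd_left hpb 0 hs.1 hs.2.le
    simp only [Real.rpow_zero, one_mul, zero_sub] at this
    calc b s / a s * (s / t) ^ γ ≤ Cb * (b t / a t) * (s / t) ^ (-(γ / 2)) * (s / t) ^ γ := by
          gcongr
      _ = _ := by
          rw [mul_assoc, ← Real.rpow_add (by positivity)]; congr 2; ring
  have out2 : Ls r (Ioi t) (fun s => ENNReal.ofReal (b s / a s) *
      Ls q (Ioo 0 s) fun u => ENNReal.ofReal (u ^ (-θ₀) * a u) * κ u) ≤
      C3 * (C1 + C2) * (H * ENNReal.ofReal m) *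
        Ls r (Ioi t) (fun s => ENNReal.ofReal (b s / a s)) := by
    refine Ls_le_mul hr measurableSet_Ioi ?_ ?_
    · simp only [ne_eq, ENNReal.mul_eq_top, ENNReal.add_eq_top, hC1, hC2, hC3, hH,
        ENNReal.ofReal_ne_top]
      tauto
    · intro s hs
      rw [mul_comm (ENNReal.ofReal (b s / a s))]
      gcongr
      exact in2 s (ht.trans hs)
  have low : ENNReal.ofReal (b t / a t) ≤ C6 * 
      Ls r (Ioi t) (fun s => ENNReal.ofReal (b s / a s)) := by
    refine (hl6 t ht).1.trans ?_
    gcongr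
    exact Ls_mono_set (fun u hu => hu.1) _
  unfold LL
  refine (hs5 _ t _ subset_rfl).trans ?_
  set B := Ls r (Ioi t) (fun s => ENNReal.ofReal (b s / a s))
  calc _ ≤ C5 * (C4 * (C1 * (H * ENNReal.ofReal m) * ENNReal.ofReal (Cb * (b t / a t))) +
        C3 * (C1 + C2) * (H * ENNReal.ofReal m) * B) := by gcongr
    _ ≤ C5 * (C4 * (C1 * (H * ENNReal.ofReal m) * (ENNReal.ofReal Cb * (C6 * B))) +
        C3 * (C1 + C2) * (H * ENNReal.ofReal m) * B) := by
        rw [ENNReal.ofReal_mul (p := Cb) (by positivity)]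
        gcongr
    _ = _ := by
        rw [hmdef, ENNReal.ofReal_mul (p := Ca) (by positivity)]
        ring

lemma XL_lower {θ₀ : ℝ} {a b : ℝ → ℝ} (ha : Pot a) (hb : Pot b)
    {r q : ℝ≥0∞} (hr : 0 < r) (hq : 0 < q) :
    ∃ C : ℝ≥0∞, C ≠ ∞ ∧ ∀ (t : ℝ) (κ : ℝ → ℝ≥0∞), 0 < t →
      (∀ u, t ≤ u → κ t ≤ κ u) →
      (ENNReal.ofReal (t ^ (-θ₀) * a t) *
        Ls r (Ioi t) (fun s => ENNReal.ofReal (b s / a s))) * κ t ≤ C * LL θ₀ r q b a κ := by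
  have hba : Pot (fun s => b s / a s) := hb.div ha
  obtain ⟨D, hD, hDd⟩ := ha.pow_double (-θ₀)
  obtain ⟨C1, hC1, -, hl⟩ := Ls_low hq
  obtain ⟨C2, hC2, hp⟩ := tail_epot hba hr 1 one_pos
  have hne : C1 * ENNReal.ofReal D ≠ ∞ := ENNReal.mul_ne_top hC1 ENNReal.ofReal_ne_top
  refine ⟨ENNReal.ofReal (C2 * 2) * (C1 * ENNReal.ofReal D),
    ENNReal.mul_ne_top ENNReal.ofReal_ne_top hne, fun t κ ht hκ => ?_⟩
  set M := ENNReal.ofReal (t ^ (-θ₀) * a t) * κ t with hM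
  have inner : ∀ s ∈ Ioi (2 * t), M ≤ (C1 * ENNReal.ofReal D) * 
      Ls q (Ioo 0 s) (fun u => ENNReal.ofReal (u ^ (-θ₀) * a u) * κ u) := by
    intro s hs
    have hs' : 2 * t < s := hs
    rw [mul_assoc, ← Ls_const_mul hq ENNReal.ofReal_ne_top]
    calc M ≤ C1 * Ls q (Ioo t (2 * t)) (fun u => ENNReal.ofReal D *
            (ENNReal.ofReal (u ^ (-θ₀) * a u) * κ u)) := by
          refine hl t _ _ ht fun u hu => ?_
          have hu0 : 0 < u := ht.trans hu.1
          rw [hM, ← mul_assoc, ← ENNReal.ofReal_mul (by linarith)]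
          have hmm : mm t u ≤ 2 := by
            rw [mm_le_iff ht hu0]; constructor <;> linarith [hu.1, hu.2]
          exact mul_le_mul' (ENNReal.ofReal_le_ofReal (hDd t u ht hu0 hmm)) (hκ u hu.1.le)
      _ ≤ _ := by
          gcongr
          exact Ls_mono_set (Ioo_subset_Ioo ht.le hs'.le) _
  have outer : M * Ls r (Ioi (2 * t)) (fun s => ENNReal.ofReal (b s / a s)) ≤
      (C1 * ENNReal.ofReal D) * LL θ₀ r q b a κ := by
    unfold LL
    rw [← Ls_const_mul hr hne]
    refine (mul_le_Ls hr measurableSet_Ioi fun s hs => ?_).trans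
      (Ls_mono_set (t := Ioi 0) (Ioi_subset_Ioi (by positivity)) _)
    calc _ ≤ (C1 * ENNReal.ofReal D) * Ls q (Ioo 0 s)
          (fun u => ENNReal.ofReal (u ^ (-θ₀) * a u) * κ u) * ENNReal.ofReal (b s / a s) := by
          gcongr; exact inner s hs
      _ = _ := by ring
  have h2t : (0:ℝ) < 2 * t := by positivity
  have mm2 : mm t (2 * t) ^ (1:ℝ) = 2 := by
    rw [mm_of_le ht (by linarith), Real.rpow_one, mul_div_cancel_right₀ _ ht.ne']
  have hp' := hp t (2 * t) ht h2t
  simp only [mm2] at hp'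
  calc _ = M * Ls r (Ioi t) (fun s => ENNReal.ofReal (b s / a s)) := by rw [hM]; ring
    _ ≤ M * (ENNReal.ofReal (C2 * 2) * Ls r (Ioi (2 * t)) (fun s => ENNReal.ofReal (b s / a s))) := by
        gcongr
    _ = ENNReal.ofReal (C2 * 2) * (M * Ls r (Ioi (2 * t)) (fun s => ENNReal.ofReal (b s / a s))) := by
        ring
    _ ≤ ENNReal.ofReal (C2 * 2) * ((C1 * ENNReal.ofReal D) * LL θ₀ r q b a κ) := by gcongr
    _ = _ := by ring

def KK (r : ℝ≥0∞) (b : ℝ → ℝ) (κ : ℝ → ℝ≥0∞) : ℝ≥0∞ :=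
  Ls r (Ioi 0) fun u => ENNReal.ofReal (u ^ (-1:ℝ) * b u) * κ u

lemma XK_upper {β : ℝ} (hβ : β < 1) {b : ℝ → ℝ} (hb : Pot b) {r : ℝ≥0∞} (hr : 0 < r) :
    ∃ C : ℝ≥0∞, C ≠ ∞ ∧ ∀ (t : ℝ) (κ : ℝ → ℝ≥0∞) (H : ℝ≥0∞), 0 < t → H ≠ ∞ →
      (∀ u, 0 < u → u ≤ t → κ u ≤ H * ENNReal.ofReal (u / t)) →
      (∀ u, t ≤ u → κ u ≤ H * ENNReal.ofReal ((u / t) ^ β)) →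
      KK r b κ ≤ C * H * (ENNReal.ofReal (t ^ (-1:ℝ)) *
        Ls r (Ioo 0 t) (fun s => ENNReal.ofReal (b s))) := by
  set δ := (1 - β) / 2 with hδdef
  have hδ : 0 < δ := by linarith
  obtain ⟨Cb, hCb, hpb⟩ := hb.pot δ hδ
  obtain ⟨C1, hC1, -, hh1⟩ := hardy_right hr hδ
  obtain ⟨C5, hC5, -, hs5⟩ := Ls_split (q := r)
  obtain ⟨C6, hC6, -, hl6⟩ := tail_low hb hr
  refine ⟨C5 * (1 + C1 * ENNReal.ofReal Cb * C6), ?_, ?_⟩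
  · simp only [ne_eq, ENNReal.mul_eq_top, ENNReal.add_eq_top, hC1, hC5, hC6,
      ENNReal.ofReal_ne_top, ENNReal.one_ne_top]
    tauto
  intro t κ H ht hH hκ1 hκ2
  have hbt := hb.pos t ht
  set B := Ls r (Ioo 0 t) (fun s => ENNReal.ofReal (b s)) with hB
  have low : ENNReal.ofReal (b t) ≤ C6 * B := by
    have := (hl6 (t / 2) (by positivity)).2
    rw [mul_div_cancel₀ _ two_ne_zero] at this
    refine this.trans ?_
    gcongr
    exact Ls_mono_set (Ioo_subset_Ioo_left (half_pos ht).le) _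
  have out1 : Ls r (Ioo 0 t) (fun u => ENNReal.ofReal (u ^ (-1:ℝ) * b u) * κ u) ≤
      H * ENNReal.ofReal (t ^ (-1:ℝ)) * B := by
    refine Ls_le_mul hr measurableSet_Ioo (ENNReal.mul_ne_top hH ENNReal.ofReal_ne_top) ?_
    intro u hu
    have hu0 := hu.1
    have := hb.pos u hu0
    refine of_bd (by positivity) (by positivity) (le_of_eq ?_) (hκ1 u hu.1 hu.2.le)
    rw [Real.rpow_neg_one, Real.rpow_neg_one]
    field_simp
  have out2 : Ls r (Ioi t) (fun u => ENNReal.ofReal (u ^ (-1:ℝ) * b u) * κ u) ≤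
      C1 * (H * ENNReal.ofReal (Cb * (t ^ (-1:ℝ) * b t))) := by
    refine hh1 t _ _ ht fun u hu => ?_
    have hu0 : 0 < u := ht.trans hu
    have := hb.pos u hu0
    refine of_bd (by positivity) (by positivity) ?_ (hκ2 u (le_of_lt hu))
    calc u ^ (-1:ℝ) * b u * (u / t) ^ β 
        ≤ Cb * (t ^ (-1:ℝ) * b t) * (u / t) ^ (-1 + δ) * (u / t) ^ β := by
          exact mul_le_mul_of_nonneg_right (pow_bd_right hpb (-1) ht (le_of_lt hu)) (by positivity)
      _ = _ := by
          rw [mul_assoc, ← Real.rpow_add (by positivity)]; congr 2; rw [hδdef]; ring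
  unfold KK
  refine (hs5 _ t _ subset_rfl).trans ?_
  calc _ ≤ C5 * (H * ENNReal.ofReal (t ^ (-1:ℝ)) * B + 
        C1 * (H * ENNReal.ofReal (Cb * (t ^ (-1:ℝ) * b t)))) := by gcongr
    _ ≤ C5 * (H * ENNReal.ofReal (t ^ (-1:ℝ)) * B + 
        C1 * (H * (ENNReal.ofReal Cb * (ENNReal.ofReal (t ^ (-1:ℝ)) * (C6 * B))))) := by
        rw [ENNReal.ofReal_mul (p := Cb) (by positivity),
          ENNReal.ofReal_mul (p := t ^ (-1:ℝ)) (by positivity)]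
        gcongr
    _ = _ := by ring

lemma XK_lower {b : ℝ → ℝ} (hb : Pot b) {r : ℝ≥0∞} (hr : 0 < r) (t : ℝ) (κ : ℝ → ℝ≥0∞)
    (ht : 0 < t) (hκ : ∀ u, 0 < u → u ≤ t → κ t ≤ ENNReal.ofReal (t / u) * κ u) :
    (ENNReal.ofReal (t ^ (-1:ℝ)) * Ls r (Ioo 0 t) (fun s => ENNReal.ofReal (b s))) * κ t ≤
      KK r b κ := by
  rw [mul_right_comm]
  refine (mul_le_Ls hr measurableSet_Ioo (h := fun u => ENNReal.ofReal (u ^ (-1:ℝ) * b u) * κ u)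
    fun u hu => ?_).trans
    (Ls_mono_set (t := Ioi 0) (fun u hu => hu.1) _)
  have hu0 := hu.1
  have := hb.pos u hu0
  calc _ ≤ ENNReal.ofReal (t ^ (-1:ℝ)) * (ENNReal.ofReal (t / u) * κ u) * ENNReal.ofReal (b u) := by
        gcongr
        exact hκ u hu.1 hu.2.le
    _ = ENNReal.ofReal (t ^ (-1:ℝ) * (t / u)) * ENNReal.ofReal (b u) * κ u := by
        rw [ENNReal.ofReal_mul (p := t ^ (-1:ℝ)) (by positivity)]; ring
    _ = _ := by
        rw [← ENNReal.ofReal_mul (by positivity), Real.rpow_neg_one, Real.rpow_neg_one]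
        congr 2
        field_simp

/-! ### Pointwise estimates of the K-functional of the endpoint spaces -/

lemma lower_pt (A₀ A₁ : QuasiBanach E) {θ₀ : ℝ} {a b b₁ : ℝ → ℝ} (ha : Pot a) (hb : Pot b)
    (hb₁ : Pot b₁) {r q r₁ : ℝ≥0∞} (hr : 0 < r) (hq : 0 < q) (hr₁ : 0 < r₁) :
    ∃ C : ℝ≥0∞, C ≠ ∞ ∧ ∀ (t : ℝ) (R W : ℝ≥0∞) (f : E), 0 < t → R ≠ ∞ →
      W = ENNReal.ofReal (t ^ (-θ₀) * a t) *
        Ls r (Ioi t) (fun s => ENNReal.ofReal (b s / a s)) →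
      R * (ENNReal.ofReal (t ^ (-1:ℝ)) * Ls r₁ (Ioo 0 t) (fun s => ENNReal.ofReal (b₁ s))) = W →
      ∀ g : E, W * Kf A₀.N A₁.N t f ≤ C *
        (LL θ₀ r q b a (fun u => Kf A₀.N A₁.N u g) +
          R * KK r₁ b₁ (fun u => Kf A₀.N A₁.N u (f - g))) := by
  obtain ⟨C, hC, hC1, hadd⟩ := Kf_add A₀ A₁
  obtain ⟨D, hD, hlow⟩ := XL_lower (θ₀ := θ₀) ha hb hr hq
  refine ⟨C * (D + 1), ENNReal.mul_ne_top hC (ENNReal.add_ne_top.2 ⟨hD, ENNReal.one_ne_top⟩), ?_⟩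
  intro t R W f ht hR hW hRW g
  have e : f = g + (f - g) := by abel
  have h1 := hlow t (fun u => Kf A₀.N A₁.N u g) ht (fun u hu => Kf_mono _ _ hu g)
  have h2 := XK_lower hb₁ hr₁ t (fun u => Kf A₀.N A₁.N u (f - g)) ht
    (fun u hu hut => Kf_scale _ _ hu hut _)
  rw [← hW] at h1
  set X := LL θ₀ r q b a (fun u => Kf A₀.N A₁.N u g)
  set Y := KK r₁ b₁ (fun u => Kf A₀.N A₁.N u (f - g))
  calc W * Kf A₀.N A₁.N t f ≤ W * (C * (Kf A₀.N A₁.N t g + Kf A₀.N A₁.N t (f - g))) := by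
        gcongr
        conv_lhs => rw [e]
        exact hadd t g (f - g)
    _ = C * (W * Kf A₀.N A₁.N t g + W * Kf A₀.N A₁.N t (f - g)) := by ring
    _ ≤ C * (D * X + R * Y) := by
        have h3 : W * Kf A₀.N A₁.N t (f - g) ≤ R * Y := by
          rw [← hRW, mul_assoc]
          gcongr
        exact mul_le_mul_right (add_le_add h1 h3) C
    _ ≤ C * ((D + 1) * X + (D + 1) * (R * Y)) := by
        refine mul_le_mul_right (add_le_add ?_ ?_) C
        · gcongr; exact le_self_add
        · exact le_mul_of_one_le_left zero_le le_add_self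
    _ = _ := by ring

lemma upper_pt (A₀ A₁ : QuasiBanach E) {θ₀ α β : ℝ} (hθ₀ : 0 < θ₀) (hα : θ₀ < α) (hαβ : α ≤ β)
    (hβ : β < 1) {a b b₁ : ℝ → ℝ} (ha : Pot a) (hb : Pot b)
    (hb₁ : Pot b₁) {r q r₁ : ℝ≥0∞} (hr : 0 < r) (hq : 0 < q) (hr₁ : 0 < r₁) :
    ∃ C : ℝ≥0∞, C ≠ ∞ ∧ ∀ (t : ℝ) (R W H : ℝ≥0∞) (f : E), 0 < t → H ≠ 0 → H ≠ ∞ →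
      W = ENNReal.ofReal (t ^ (-θ₀) * a t) *
        Ls r (Ioi t) (fun s => ENNReal.ofReal (b s / a s)) →
      R * (ENNReal.ofReal (t ^ (-1:ℝ)) * Ls r₁ (Ioo 0 t) (fun s => ENNReal.ofReal (b₁ s))) = W →
      (∀ u, 0 < u → u ≤ t → Kf A₀.N A₁.N u f ≤ H * ENNReal.ofReal ((u / t) ^ α)) →
      (∀ u, t ≤ u → Kf A₀.N A₁.N u f ≤ H * ENNReal.ofReal ((u / t) ^ β)) →
      ∃ g : E, LL θ₀ r q b a (fun u => Kf A₀.N A₁.N u g) +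
          R * KK r₁ b₁ (fun u => Kf A₀.N A₁.N u (f - g)) ≤ C * H * W := by
  obtain ⟨C, hC, hC1, hadd⟩ := Kf_add A₀ A₁
  obtain ⟨D, hD, hup0⟩ := XL_upper hθ₀ hα ha hb hr hq
  obtain ⟨D', hD', hup1⟩ := XK_upper hβ hb₁ hr₁
  refine ⟨(D + D') * (C * 3), ENNReal.mul_ne_top (ENNReal.add_ne_top.2 ⟨hD, hD'⟩)
    (ENNReal.mul_ne_top hC (by simp)), ?_⟩
  intro t R W H f ht hH0 hH hW hRW h1 h2
  have hlt : Kf A₀.N A₁.N t f < 2 * H := by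
    refine lt_of_le_of_lt (h1 t ht le_rfl) ?_
    rw [div_self ht.ne', Real.one_rpow, ENNReal.ofReal_one, mul_one, two_mul]
    exact ENNReal.lt_add_right hH hH0
  obtain ⟨g, hg⟩ := iInf_lt_iff.1 hlt
  have hg0 : A₀.N g ≤ 2 * H := le_trans le_self_add hg.le
  have hg1 : ENNReal.ofReal t * A₁.N (f - g) ≤ 2 * H := le_trans le_add_self hg.le
  have hKg : ∀ u, Kf A₀.N A₁.N u g ≤ 2 * H := fun u => (Kf_le_left A₀ A₁ u g).trans hg0
  have hKfg : ∀ u, 0 < u → Kf A₀.N A₁.N u (f - g) ≤ 2 * H * ENNReal.ofReal (u / t) := by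
    intro u hu
    calc Kf A₀.N A₁.N u (f - g) ≤ ENNReal.ofReal u * A₁.N (f - g) := Kf_le_right A₀ A₁ u _
      _ = ENNReal.ofReal (u / t) * (ENNReal.ofReal t * A₁.N (f - g)) := by
          rw [← mul_assoc, ← ENNReal.ofReal_mul (by positivity), div_mul_cancel₀ _ ht.ne']
      _ ≤ _ := by rw [mul_comm]; gcongr
  have hH3 : C * 3 * H ≠ ∞ := ENNReal.mul_ne_top (ENNReal.mul_ne_top hC (by simp)) hH
  have h2C : 2 * H ≤ C * 3 * H := by
    gcongr
    calc (2:ℝ≥0∞) ≤ 1 * 3 := by norm_num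
      _ ≤ C * 3 := by gcongr
  have eg : g = f + -(f - g) := by abel
  have efg : f - g = f + -g := by abel
  have b1 := hup0 t (fun u => Kf A₀.N A₁.N u g) (C * 3 * H) ht hH3 (by
    intro u hu hut
    have hle : u / t ≤ (u / t) ^ α := by
      conv_lhs => rw [← Real.rpow_one (u / t)]
      exact Real.rpow_le_rpow_of_exponent_ge (by positivity) ((div_le_one ht).2 hut) (by linarith)
    calc Kf A₀.N A₁.N u g ≤ C * (Kf A₀.N A₁.N u f + Kf A₀.N A₁.N u (f - g)) := by
          conv_lhs => rw [eg]
          refine (hadd _ _ _).trans ?_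
          gcongr
          exact Kf_neg _ _ _ _
      _ ≤ C * (H * ENNReal.ofReal ((u / t) ^ α) + 2 * H * ENNReal.ofReal ((u / t) ^ α)) := by
          gcongr
          · exact h1 u hu hut
          · exact (hKfg u hu).trans (by gcongr)
      _ = _ := by ring) (fun u _ => (hKg u).trans h2C)
  have b2 := hup1 t (fun u => Kf A₀.N A₁.N u (f - g)) (C * 3 * H) ht hH3
    (fun u hu _ => (hKfg u hu).trans (by gcongr)) (by
    intro u hut
    have hle : 1 ≤ (u / t) ^ β := Real.one_le_rpow ((one_le_div ht).2 hut) (by linarith)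
    have hle' : (1:ℝ≥0∞) ≤ ENNReal.ofReal ((u / t) ^ β) := by simpa using hle
    calc Kf A₀.N A₁.N u (f - g) ≤ C * (Kf A₀.N A₁.N u f + Kf A₀.N A₁.N u g) := by
          conv_lhs => rw [efg]
          refine (hadd _ _ _).trans ?_
          gcongr
          exact Kf_neg _ _ _ _
      _ ≤ C * (H * ENNReal.ofReal ((u / t) ^ β) + 2 * H * ENNReal.ofReal ((u / t) ^ β)) := by
          gcongr
          · exact h2 u hut
          · exact (hKg u).trans (le_mul_of_one_le_right zero_le hle')
      _ = _ := by ring)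
  refine ⟨g, ?_⟩
  rw [← hW] at b1
  calc _ ≤ D * (C * 3 * H) * W + R * (D' * (C * 3 * H) * (ENNReal.ofReal (t ^ (-1:ℝ)) *
        Ls r₁ (Ioo 0 t) (fun s => ENNReal.ofReal (b₁ s)))) := by gcongr
    _ = D * (C * 3 * H) * W + D' * (C * 3 * H) * W := by rw [← hRW]; ring
    _ = _ := by ring

/-! ### Discretization and a Schur-type lemma -/

def lr (r : ℝ≥0∞) (X : ℤ → ℝ≥0∞) : ℝ≥0∞ :=
  if r = ∞ then ⨆ n, X n else (∑' n, X n ^ r.toReal) ^ r⁻¹.toReal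

lemma lr_mono {r : ℝ≥0∞} {X Y : ℤ → ℝ≥0∞} (h : ∀ n, X n ≤ Y n) : lr r X ≤ lr r Y := by
  unfold lr
  split_ifs
  · exact iSup_mono h
  · refine ENNReal.rpow_le_rpow (ENNReal.tsum_le_tsum fun n => ?_) ENNReal.toReal_nonneg
    exact ENNReal.rpow_le_rpow (h n) ENNReal.toReal_nonneg

lemma lr_const_mul {r : ℝ≥0∞} (hr : 0 < r) (c : ℝ≥0∞) (X : ℤ → ℝ≥0∞) :
    lr r (fun n => c * X n) = c * lr r X := by
  unfold lr
  split_ifs with h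
  · rw [ENNReal.mul_iSup]
  · have hp : 0 < r.toReal := ENNReal.toReal_pos hr.ne' h
    simp_rw [ENNReal.mul_rpow_of_nonneg _ _ hp.le]
    rw [ENNReal.tsum_mul_left, ENNReal.mul_rpow_of_nonneg _ _ ENNReal.toReal_nonneg,
      ← ENNReal.rpow_mul, ENNReal.toReal_inv, mul_inv_cancel₀ hp.ne', ENNReal.rpow_one]

lemma geom_ne_top {ε : ℝ} (hε : 0 < ε) :
    ∑' n : ℤ, ENNReal.ofReal ((2:ℝ) ^ (-ε * |(n:ℝ)|)) ≠ ∞ := by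
  have h0 : (0:ℝ) ≤ (2:ℝ) ^ (-ε) := by positivity
  have h1 : (2:ℝ) ^ (-ε) < 1 := Real.rpow_lt_one_of_one_lt_of_neg one_lt_two (by linarith)
  have hs := summable_geometric_of_lt_one h0 h1
  have hs' : Summable fun n : ℤ => (2:ℝ) ^ (-ε * |(n:ℝ)|) := by
    refine Summable.of_nat_of_neg ?_ ?_
    · refine hs.congr fun n => ?_
      rw [← Real.rpow_natCast, ← Real.rpow_mul (by norm_num)]
      simp
    · refine hs.congr fun n => ?_
      rw [← Real.rpow_natCast, ← Real.rpow_mul (by norm_num)]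
      simp
  exact hs'.tsum_ofReal_ne_top

lemma schur {r : ℝ≥0∞} (hr : 0 < r) {ε : ℝ} (hε : 0 < ε) :
    ∃ C : ℝ≥0∞, C ≠ ∞ ∧ ∀ (τ : ℤ → ℤ) (X Y : ℤ → ℝ≥0∞),
      (∀ n, X n ≤ ⨆ k, ENNReal.ofReal ((2:ℝ) ^ (-ε * |((n - τ k : ℤ):ℝ)|)) * Y k) →
      lr r X ≤ C * lr r Y := by
  by_cases h : r = ∞
  · refine ⟨1, by simp, fun τ X Y hX => ?_⟩
    simp only [lr, if_pos h, one_mul]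
    refine iSup_le fun n => (hX n).trans (iSup_mono fun k => ?_)
    refine mul_le_of_le_one_left zero_le ?_
    rw [ENNReal.ofReal_le_one]
    refine Real.rpow_le_one_of_one_le_of_nonpos one_le_two ?_
    have := abs_nonneg ((n - τ k : ℤ):ℝ)
    nlinarith
  · have hp : 0 < r.toReal := ENNReal.toReal_pos hr.ne' h
    set p := r.toReal with hpdef
    have hS := geom_ne_top (mul_pos hε hp)
    set S := ∑' n : ℤ, ENNReal.ofReal ((2:ℝ) ^ (-(ε * p) * |(n:ℝ)|)) with hSdef
    refine ⟨S ^ p⁻¹, ENNReal.rpow_ne_top_of_nonneg (by positivity) hS, fun τ X Y hX => ?_⟩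
    have hr' : r⁻¹.toReal = p⁻¹ := by rw [ENNReal.toReal_inv]
    simp only [lr, if_neg h, hr', ← hpdef]
    rw [← ENNReal.mul_rpow_of_nonneg _ _ (by positivity)]
    refine ENNReal.rpow_le_rpow ?_ (by positivity)
    have e : ∀ n k, (ENNReal.ofReal ((2:ℝ) ^ (-ε * |((n - τ k : ℤ):ℝ)|)) * Y k) ^ p =
        ENNReal.ofReal ((2:ℝ) ^ (-(ε * p) * |((n - τ k : ℤ):ℝ)|)) * Y k ^ p := by
      intro n k
      rw [ENNReal.mul_rpow_of_nonneg _ _ hp.le, ENNReal.ofReal_rpow_of_nonneg (by positivity) hp.le,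
        ← Real.rpow_mul (by norm_num)]
      congr 3
      ring
    have hX' : ∀ n, X n ^ p ≤
        ∑' k, ENNReal.ofReal ((2:ℝ) ^ (-(ε * p) * |((n - τ k : ℤ):ℝ)|)) * Y k ^ p := by
      intro n
      have : X n ≤ (∑' k, ENNReal.ofReal ((2:ℝ) ^ (-(ε * p) * |((n - τ k : ℤ):ℝ)|)) * Y k ^ p) ^ p⁻¹ := by
        refine (hX n).trans (iSup_le fun k => ?_)
        rw [← ENNReal.rpow_le_rpow_iff hp, ← ENNReal.rpow_mul, inv_mul_cancel₀ hp.ne',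
          ENNReal.rpow_one, e]
        exact ENNReal.le_tsum k
      calc X n ^ p ≤ _ := ENNReal.rpow_le_rpow this hp.le
        _ = _ := by rw [← ENNReal.rpow_mul, inv_mul_cancel₀ hp.ne', ENNReal.rpow_one]
    calc ∑' n, X n ^ p ≤ ∑' n, ∑' k,
          ENNReal.ofReal ((2:ℝ) ^ (-(ε * p) * |((n - τ k : ℤ):ℝ)|)) * Y k ^ p :=
          ENNReal.tsum_le_tsum hX'
      _ = ∑' k, ∑' n, ENNReal.ofReal ((2:ℝ) ^ (-(ε * p) * |((n - τ k : ℤ):ℝ)|)) * Y k ^ p :=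
          ENNReal.tsum_comm
      _ = ∑' k, S * Y k ^ p := by
          congr 1; ext k
          rw [ENNReal.tsum_mul_right]
          congr 1
          exact (Equiv.subRight (τ k)).tsum_eq
            (fun n : ℤ => ENNReal.ofReal ((2:ℝ) ^ (-(ε * p) * |(n:ℝ)|)))
      _ = _ := ENNReal.tsum_mul_left

lemma mm_log {u : ℝ} (hu : 0 < u) : mm ((2:ℝ) ^ Int.log 2 u) u ≤ 2 := by
  have h1 := Int.zpow_log_le_self (b := 2) (r := u) (by norm_num) hu
  have h2 := Int.lt_zpow_succ_log_self (b := 2) (by norm_num) u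
  push_cast at h1 h2
  rw [zpow_add_one₀ (by norm_num)] at h2
  rw [mm_le_iff (by positivity) hu]
  constructor <;> linarith

lemma mm_zpow (m n : ℤ) : mm ((2:ℝ) ^ m) ((2:ℝ) ^ n) = (2:ℝ) ^ (|((m - n : ℤ):ℝ)|) := by
  wlog h : m ≤ n generalizing m n
  · rw [mm_comm, this n m (by omega)]
    congr 1
    push_cast
    exact abs_sub_comm _ _
  · rw [mm_of_le (by positivity) (zpow_le_zpow_right₀ one_le_two h), ← zpow_sub₀ (by norm_num)]
    have : |((m - n : ℤ):ℝ)| = ((n - m : ℤ):ℝ) := by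
      rw [abs_of_nonpos (by exact_mod_cast sub_nonpos.2 h)]; push_cast; ring
    rw [this, Real.rpow_intCast]

lemma Ioi_eq_iUnion : Ioi (0:ℝ) = ⋃ n : ℤ, Ico ((2:ℝ) ^ n) ((2:ℝ) ^ (n + 1)) := by
  ext u
  simp only [mem_Ioi, mem_iUnion]
  constructor
  · exact fun hu => exists_mem_Ico_zpow hu one_lt_two
  · rintro ⟨n, hn⟩
    exact lt_of_lt_of_le (by positivity) hn.1

lemma lint_dyadic (G : ℝ → ℝ≥0∞) : ∫⁻ u in Ioi (0:ℝ), G u =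
    ∑' n : ℤ, ∫⁻ u in Ico ((2:ℝ) ^ n) ((2:ℝ) ^ (n + 1)), G u := by
  rw [Ioi_eq_iUnion]
  refine lintegral_iUnion (fun n => measurableSet_Ico) ?_ _
  intro m n hmn
  rw [Function.onFun, Set.disjoint_left]
  intro u h1 h2
  have a1 := (zpow_lt_zpow_iff_right₀ (one_lt_two (α := ℝ))).1 (h1.1.trans_lt h2.2)
  have a2 := (zpow_lt_zpow_iff_right₀ (one_lt_two (α := ℝ))).1 (h2.1.trans_lt h1.2)
  omega

lemma mm_Ico {n : ℤ} {u : ℝ} (hu : u ∈ Ico ((2:ℝ) ^ n) ((2:ℝ) ^ (n + 1))) :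
    0 < u ∧ mm u ((2:ℝ) ^ n) ≤ 2 := by
  have h0 : (0:ℝ) < 2 ^ n := by positivity
  have h1 := hu.1
  have h2 := hu.2
  rw [zpow_add_one₀ (by norm_num)] at h2
  have hu0 := h0.trans_le h1
  refine ⟨hu0, ?_⟩
  rw [mm_le_iff hu0 h0]
  constructor <;> linarith

lemma vol_dyadic (n : ℤ) : volume (Ico ((2:ℝ) ^ n) ((2:ℝ) ^ (n + 1))) = ENNReal.ofReal ((2:ℝ) ^ n) := by
  rw [Real.volume_Ico, zpow_add_one₀ (by norm_num)]; congr 1; ring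

lemma disc_upper {r : ℝ≥0∞} (hr : 0 < r) {D : ℝ≥0∞} (G : ℝ → ℝ≥0∞)
    (hG : ∀ u v, 0 < u → 0 < v → mm u v ≤ 2 → G u ≤ D * G v) :
    Ls r (Ioi 0) G ≤ D * lr r (fun n => G ((2:ℝ) ^ n)) := by
  by_cases h : r = ∞
  · subst h
    rw [Ls_top, lr, if_pos rfl]
    refine essSup_le_of_ae_le _ (ae_restrict_of_forall_mem measurableSet_Ioi fun u hu => ?_)
    obtain ⟨n, hn⟩ := exists_mem_Ico_zpow (show (0:ℝ) < u from hu) one_lt_two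
    refine (hG u _ hu (by positivity) (mm_Ico hn).2).trans ?_
    exact mul_le_mul_right (le_iSup (fun n : ℤ => G ((2:ℝ) ^ n)) n) D
  · have hp : 0 < r.toReal := ENNReal.toReal_pos hr.ne' h
    rw [← lr_const_mul hr, Ls_of_ne_top hr h measurableSet_Ioi subset_rfl, lr, if_neg h]
    refine ENNReal.rpow_le_rpow ?_ ENNReal.toReal_nonneg
    rw [lint_dyadic]
    refine ENNReal.tsum_le_tsum fun n => ?_
    calc _ ≤ ∫⁻ u in Ico ((2:ℝ) ^ n) ((2:ℝ) ^ (n + 1)), ENNReal.ofReal (((2:ℝ) ^ n)⁻¹) *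
          (D * G ((2:ℝ) ^ n)) ^ r.toReal := by
          refine setLIntegral_mono' measurableSet_Ico fun u hu => ?_
          obtain ⟨h1, h2⟩ := mm_Ico hu
          have h3 := hG u _ h1 (by positivity) h2
          have h4 : u⁻¹ ≤ ((2:ℝ) ^ n)⁻¹ := inv_anti₀ (by positivity) hu.1
          exact mul_le_mul' (ENNReal.ofReal_le_ofReal h4) (ENNReal.rpow_le_rpow h3 hp.le)
      _ = _ := by
          rw [setLIntegral_const, vol_dyadic, mul_right_comm,
            ← ENNReal.ofReal_mul (by positivity), inv_mul_cancel₀ (by positivity),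
            ENNReal.ofReal_one, one_mul]

lemma disc_lower {r : ℝ≥0∞} (hr : 0 < r) {D : ℝ≥0∞} (hD : D ≠ ∞) : ∃ C : ℝ≥0∞, C ≠ ∞ ∧
    ∀ G : ℝ → ℝ≥0∞, (∀ u v, 0 < u → 0 < v → mm u v ≤ 2 → G u ≤ D * G v) →
    lr r (fun n => G ((2:ℝ) ^ n)) ≤ C * Ls r (Ioi 0) G := by
  by_cases h : r = ∞
  · subst h
    refine ⟨D, hD, fun G hG => ?_⟩
    rw [lr, if_pos rfl]
    refine iSup_le fun n => ?_
    have h0 : (0:ℝ) < 2 ^ n := by positivity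
    rw [Ls_top, ← ENNReal.essSup_const_mul]
    have h1 : (∃ᵐ u ∂(volume.restrict (Ioi (0:ℝ))), G ((2:ℝ) ^ n) ≤ D * G u) := by
      rw [Filter.Frequently]
      intro hc
      rw [ae_restrict_iff' measurableSet_Ioi] at hc
      have : volume (Ico ((2:ℝ) ^ n) ((2:ℝ) ^ (n + 1))) = 0 := by
        refine measure_mono_null ?_ hc
        intro u hu hcon
        obtain ⟨h1, h2⟩ := mm_Ico hu
        exact hcon h1 (hG _ u h0 h1 (by rwa [mm_comm]))
      rw [vol_dyadic] at this
      simp at this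
      linarith
    exact le_limsup_of_frequently_le h1
  · have hp : 0 < r.toReal := ENNReal.toReal_pos hr.ne' h
    refine ⟨2 ^ r⁻¹.toReal * D, ENNReal.mul_ne_top
      (ENNReal.rpow_ne_top_of_nonneg ENNReal.toReal_nonneg (by simp)) hD, fun G hG => ?_⟩
    rw [mul_assoc, ← Ls_const_mul hr hD, Ls_of_ne_top hr h measurableSet_Ioi subset_rfl, lr,
      if_neg h, ← ENNReal.mul_rpow_of_nonneg _ _ ENNReal.toReal_nonneg]
    refine ENNReal.rpow_le_rpow ?_ ENNReal.toReal_nonneg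
    rw [lint_dyadic, ← ENNReal.tsum_mul_left]
    refine ENNReal.tsum_le_tsum fun n => ?_
    have h0 : (0:ℝ) < 2 ^ n := by positivity
    calc G ((2:ℝ) ^ n) ^ r.toReal = 2 * ∫⁻ u in Ico ((2:ℝ) ^ n) ((2:ℝ) ^ (n + 1)),
          ENNReal.ofReal (((2:ℝ) ^ (n + 1))⁻¹) * G ((2:ℝ) ^ n) ^ r.toReal := by
          rw [setLIntegral_const, vol_dyadic, mul_right_comm,
            ← ENNReal.ofReal_mul (by positivity), ← mul_assoc,
            show (2:ℝ≥0∞) = ENNReal.ofReal 2 by simp,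
            ← ENNReal.ofReal_mul (by positivity), zpow_add_one₀ (by norm_num)]
          have : (2:ℝ) * ((2 ^ n * 2)⁻¹ * 2 ^ n) = 1 := by field_simp
          rw [this, ENNReal.ofReal_one, one_mul]
      _ ≤ _ := by
          gcongr 2 * ?_
          refine setLIntegral_mono' measurableSet_Ico fun u hu => ?_
          obtain ⟨h1, h2⟩ := mm_Ico hu
          have h3 := hG _ u h0 h1 (by rwa [mm_comm])
          have h4 : ((2:ℝ) ^ (n + 1))⁻¹ ≤ u⁻¹ := inv_anti₀ h1 hu.2.le
          exact mul_le_mul' (ENNReal.ofReal_le_ofReal h4) (ENNReal.rpow_le_rpow h3 hp.le)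

/-! ### The change of variables -/

lemma Grow.mm_lower {ρ : ℝ → ℝ} {δ : ℝ} (hρ : Grow ρ δ) : ∃ C : ℝ, 1 ≤ C ∧
    ∀ u v : ℝ, 0 < u → 0 < v → mm u v ^ δ ≤ C * mm (ρ u) (ρ v) := by
  obtain ⟨C, hC, h⟩ := hρ.lower
  have key : ∀ u v : ℝ, 0 < u → u ≤ v → mm u v ^ δ ≤ C * mm (ρ u) (ρ v) := by
    intro u v hu huv
    have hv := hu.trans_le huv
    have h1 := h u v hu huv
    have hpu := hρ.pos u hu
    have hpv := hρ.pos v hv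
    rw [mm_of_le hu huv]
    have h2 : (v / u) ^ δ ≤ C * (ρ v / ρ u) := by
      rw [← mul_div_assoc, le_div_iff₀ hpu]; exact h1
    refine h2.trans ?_
    gcongr
    exact le_max_right _ _
  refine ⟨C, hC, fun u v hu hv => ?_⟩
  rcases le_total u v with huv | huv
  · exact key u v hu huv
  · rw [mm_comm, mm_comm (ρ u)]; exact key v u hv huv

lemma Grow.surj {ρ : ℝ → ℝ} {δ : ℝ} (hδ : 0 < δ) (hρ : Grow ρ δ) : ∃ C : ℝ, 1 ≤ C ∧
    ∀ y : ℝ, 0 < y → ∃ t : ℝ, 0 < t ∧ mm (ρ t) y ≤ C := by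
  obtain ⟨C, hC, h⟩ := hρ.lower
  obtain ⟨K, hK, hup⟩ := hρ.upper
  have hC0 : 0 < C := by linarith
  refine ⟨K * 4, by linarith, fun y hy => ?_⟩
  have hρ1 := hρ.pos 1 one_pos
  set S : Set ℝ := {t | 0 < t ∧ ρ t ≤ y} with hS
  have hne : S.Nonempty := by
    set z := 1 + C * ρ 1 / y with hz
    have hz0 : 0 < C * ρ 1 / y := by positivity
    have hz1 : 1 ≤ z := by linarith
    have hz' : 0 < z := by linarith
    refine ⟨z ^ (-δ⁻¹), by positivity, ?_⟩
    have hle : z ^ (-δ⁻¹) ≤ 1 := Real.rpow_le_one_of_one_le_of_nonpos hz1 (by simp [hδ.le])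
    have h1 := h (z ^ (-δ⁻¹)) 1 (by positivity) hle
    have e : (1 / z ^ (-δ⁻¹)) ^ δ = z := by
      rw [one_div, ← Real.rpow_neg hz'.le, neg_neg, ← Real.rpow_mul hz'.le,
        inv_mul_cancel₀ hδ.ne', Real.rpow_one]
    rw [e] at h1
    have h2 : C * ρ 1 ≤ z * y := by
      rw [hz, add_mul, div_mul_cancel₀ _ hy.ne']; linarith
    have := h1.trans h2
    exact le_of_mul_le_mul_left this hz'
  have hbdd : BddAbove S := by
    refine ⟨max 1 ((C * y / ρ 1) ^ δ⁻¹), ?_⟩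
    rintro v ⟨hv, hvy⟩
    rcases le_total v 1 with h1 | h1
    · exact le_max_of_le_left h1
    · apply le_max_of_le_right
      have h2 := h 1 v one_pos h1
      rw [div_one] at h2
      have h3 : v ^ δ ≤ C * y / ρ 1 := by
        rw [le_div_iff₀ hρ1]
        exact h2.trans (by gcongr)
      calc v = (v ^ δ) ^ δ⁻¹ := by
            rw [← Real.rpow_mul hv.le, mul_inv_cancel₀ hδ.ne', Real.rpow_one]
        _ ≤ _ := Real.rpow_le_rpow (by positivity) h3 (by positivity)
  have hpos : 0 < sSup S := by
    obtain ⟨t, ht⟩ := hne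
    exact ht.1.trans_le (le_csSup hbdd ht)
  obtain ⟨t, ht, hlt⟩ := exists_lt_of_lt_csSup hne (half_lt_self hpos)
  have ht0 := ht.1
  have h2 : y < ρ (2 * t) := by
    by_contra hcon
    have := le_csSup hbdd (show 2 * t ∈ S from ⟨by positivity, not_lt.1 hcon⟩)
    linarith
  refine ⟨t, ht0, ?_⟩
  have h3 := hup (2 * t) t (by positivity) ht0
  rw [mm_comm (2 * t), mm_of_le ht0 (by linarith), mul_div_cancel_right₀ _ ht0.ne'] at h3
  have h4 : (2:ℝ) ^ (2:ℝ) = 4 := by norm_num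
  rw [h4, mm_le_iff (hρ.pos _ (by positivity)) (hρ.pos _ ht0)] at h3
  have hpt := hρ.pos t ht0
  rw [mm_le_iff hpt hy]
  constructor
  · refine ht.2.trans ?_
    nlinarith
  · exact h2.le.trans h3.1

lemma outer {ρ : ℝ → ℝ} {δ : ℝ} (hδ : 0 < δ) (hρ : Grow ρ δ) {r : ℝ≥0∞} (hr : 0 < r)
    {D p ε : ℝ} (hD : 1 ≤ D) (hp : 0 < p) (hε : 0 < ε) {C : ℝ≥0∞} (hC : C ≠ ∞) :
    ∃ C' : ℝ≥0∞, C' ≠ ∞ ∧ ∀ F x : ℝ → ℝ≥0∞,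
      (∀ u v, 0 < u → 0 < v → F u ≤ ENNReal.ofReal (D * mm u v ^ p) * F v) →
      (∀ u v, 0 < u → 0 < v → x u ≤ ENNReal.ofReal (D * mm u v ^ p) * x v) →
      (∀ t, 0 < t → x t ≤ C * F (ρ t)) →
      (∀ t, 0 < t → F (ρ t) ≤ C * ⨆ u : Ioi (0:ℝ), ENNReal.ofReal (mm u t ^ (-ε)) * x u) →
      Ls r (Ioi 0) F ≤ C' * Ls r (Ioi 0) x ∧ Ls r (Ioi 0) x ≤ C' * Ls r (Ioi 0) F := by
  have hD0 : 0 < D := by linarith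
  set D2 : ℝ≥0∞ := ENNReal.ofReal (D * 2 ^ p) with hD2
  have hD2t : D2 ≠ ∞ := ENNReal.ofReal_ne_top
  obtain ⟨Cl, hCl, hlow⟩ := disc_lower hr hD2t
  obtain ⟨S1, hS1, hsch1⟩ := schur hr (half_pos hε)
  obtain ⟨S2, hS2, hsch2⟩ := schur hr one_pos
  obtain ⟨L, hL, hLl⟩ := hρ.mm_lower
  obtain ⟨K, hK, hup⟩ := hρ.upper
  obtain ⟨M, hM, hsurj⟩ := hρ.surj hδ
  have hL0 : 0 < L := by linarith
  have hK0 : 0 < K := by linarith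
  have hM0 : 0 < M := by linarith
  set Q : ℝ := 2 * (K * 4) * K * M with hQ
  have hQ0 : 0 < Q := by positivity
  set Q2 : ℝ := (L * 4) ^ δ⁻¹ with hQ2
  have hQ20 : 0 < Q2 := by positivity
  set c1 : ℝ≥0∞ := ENNReal.ofReal (D * M ^ p) * (C * (ENNReal.ofReal (Q ^ (ε / 2)) * D2)) with hc1
  set c2 : ℝ≥0∞ := C * D2 * ENNReal.ofReal Q2 with hc2
  have hc1t : c1 ≠ ∞ := ENNReal.mul_ne_top ENNReal.ofReal_ne_top
    (ENNReal.mul_ne_top hC (ENNReal.mul_ne_top ENNReal.ofReal_ne_top hD2t))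
  have hc2t : c2 ≠ ∞ := ENNReal.mul_ne_top (ENNReal.mul_ne_top hC hD2t) ENNReal.ofReal_ne_top
  set C' : ℝ≥0∞ := D2 * (S1 * (c1 * Cl)) + D2 * (S2 * (c2 * Cl)) with hC'
  refine ⟨C', ENNReal.add_ne_top.2 ⟨ENNReal.mul_ne_top hD2t (ENNReal.mul_ne_top hS1
    (ENNReal.mul_ne_top hc1t hCl)), ENNReal.mul_ne_top hD2t (ENNReal.mul_ne_top hS2
    (ENNReal.mul_ne_top hc2t hCl))⟩, ?_⟩
  intro F x hF hx hxF hFx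
  have dbl : ∀ {G : ℝ → ℝ≥0∞} {c : ℝ},
      (∀ u v, 0 < u → 0 < v → G u ≤ ENNReal.ofReal (D * mm u v ^ p) * G v) →
      ∀ u v, 0 < u → 0 < v → mm u v ≤ c → G u ≤ ENNReal.ofReal (D * c ^ p) * G v := by
    intro G c hG u v hu hv huv
    refine (hG u v hu hv).trans ?_
    have := mm_pos hu hv
    have h1 : D * mm u v ^ p ≤ D * c ^ p := by gcongr
    exact mul_le_mul_left (ENNReal.ofReal_le_ofReal h1) _
  have hF2 := dbl (c := 2) hF
  have hx2 := dbl (c := 2) hx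
  set P : ℤ → ℝ := fun n => (2:ℝ) ^ n with hP
  have hP0 : ∀ n, 0 < P n := fun n => by simp only [hP]; positivity
  set τ : ℤ → ℤ := fun m => Int.log 2 (ρ (P m)) with hτ
  have hτm : ∀ m, mm (P (τ m)) (ρ (P m)) ≤ 2 := fun m => mm_log (hρ.pos _ (hP0 m))
  constructor
  · -- `F ≲ x`
    have main : ∀ n, F (P n) ≤
        ⨆ k, ENNReal.ofReal ((2:ℝ) ^ (-(ε / 2) * |((n - τ k : ℤ):ℝ)|)) * (c1 * x (P k)) := by
      intro n
      obtain ⟨t, ht, htn⟩ := hsurj (P n) (hP0 n)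
      have hpt := hρ.pos t ht
      refine (dbl (c := M) hF _ (ρ t) (hP0 n) hpt (by rwa [mm_comm])).trans ?_
      refine (mul_le_mul_right (hFx t ht) _).trans ?_
      rw [← mul_assoc, ENNReal.mul_iSup]
      refine iSup_le fun u => ?_
      obtain ⟨u, hu⟩ := u
      have hu0 : 0 < u := hu
      simp only
      set m := Int.log 2 u with hm
      have hmu : mm (P m) u ≤ 2 := mm_log hu0
      refine le_trans ?_ (le_iSup _ m)
      have hxu : x u ≤ D2 * x (P m) := hx2 u (P m) hu0 (hP0 m) (by rwa [mm_comm])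
      have hpu := hρ.pos u hu0
      have hpm := hρ.pos _ (hP0 m)
      have hmut := mm_pos hu0 ht
      have t1 : mm (P (τ m)) (P n) ≤ Q * mm u t ^ (2:ℝ) := by
        have a1 := mm_triangle (hP0 (τ m)) hpm (hP0 n)
        have a2 := mm_triangle hpm hpu (hP0 n)
        have a3 := mm_triangle hpu hpt (hP0 n)
        have b1 := hup (P m) u (hP0 m) hu0
        have b2 := hup u t hu0 ht
        have b3 : mm (P m) u ^ (2:ℝ) ≤ 4 := by
          calc mm (P m) u ^ (2:ℝ) ≤ 2 ^ (2:ℝ) :=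
                Real.rpow_le_rpow (mm_pos (hP0 m) hu0).le hmu (by norm_num)
            _ = 4 := by norm_num
        have p1 := (mm_pos (hP0 (τ m)) hpm).le
        have p2 := (mm_pos hpm hpu).le
        have p3 := (mm_pos hpu hpt).le
        have p4 := (mm_pos hpt (hP0 n)).le
        have p5 := (mm_pos hpm (hP0 n)).le
        have p6 := (mm_pos hpu (hP0 n)).le
        calc mm (P (τ m)) (P n) ≤ mm (P (τ m)) (ρ (P m)) * (mm (ρ (P m)) (ρ u) *
              (mm (ρ u) (ρ t) * mm (ρ t) (P n))) :=
              a1.trans (mul_le_mul_of_nonneg_left (a2.trans (mul_le_mul_of_nonneg_left a3 p2)) p1)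
          _ ≤ 2 * ((K * 4) * ((K * mm u t ^ (2:ℝ)) * M)) := by
              have e1 := mul_le_mul b2 htn p4 (by positivity)
              have e2 := mul_le_mul (b1.trans (mul_le_mul_of_nonneg_left b3 hK0.le)) e1
                (by positivity) (by positivity)
              exact mul_le_mul (hτm m) e2 (by positivity) (by positivity)
          _ = _ := by rw [hQ]; ring
      have t2 : mm u t ^ (-ε) ≤ Q ^ (ε / 2) * (2:ℝ) ^ (-(ε / 2) * |((n - τ m : ℤ):ℝ)|) := by
        set j := |((n - τ m : ℤ):ℝ)| with hj
        have e1 : mm (P (τ m)) (P n) = (2:ℝ) ^ j := by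
          rw [mm_comm, hj]; exact mm_zpow n (τ m)
        rw [e1] at t1
        have e2 : ((2:ℝ) ^ j) ^ (ε / 2) ≤ Q ^ (ε / 2) * mm u t ^ ε := by
          refine (Real.rpow_le_rpow (by positivity) t1 (by positivity)).trans (le_of_eq ?_)
          rw [Real.mul_rpow hQ0.le (by positivity), ← Real.rpow_mul hmut.le]
          congr 2; ring
        rw [Real.rpow_neg hmut.le, show -(ε / 2) * j = -(j * (ε / 2)) by ring,
          Real.rpow_neg (by norm_num), Real.rpow_mul (by norm_num), ← div_eq_mul_inv,
          le_div_iff₀ (by positivity), inv_mul_le_iff₀ (by positivity), mul_comm (mm u t ^ ε)]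
        exact e2
      calc _ ≤ ENNReal.ofReal (D * M ^ p) * C * (ENNReal.ofReal
            (Q ^ (ε / 2) * (2:ℝ) ^ (-(ε / 2) * |((n - τ m : ℤ):ℝ)|)) * (D2 * x (P m))) := by
            exact mul_le_mul_right (mul_le_mul' (ENNReal.ofReal_le_ofReal t2) hxu) _
        _ = _ := by
            rw [ENNReal.ofReal_mul (p := Q ^ (ε / 2)) (by positivity), hc1]; ring
    calc Ls r (Ioi 0) F ≤ D2 * lr r (fun n => F (P n)) := disc_upper hr F hF2
      _ ≤ D2 * (S1 * lr r (fun n => c1 * x (P n))) := by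
          gcongr; exact hsch1 τ _ _ main
      _ ≤ D2 * (S1 * (c1 * (Cl * Ls r (Ioi 0) x))) := by
          rw [lr_const_mul hr]; gcongr; exact hlow x hx2
      _ = D2 * (S1 * (c1 * Cl)) * Ls r (Ioi 0) x := by ring
      _ ≤ C' * Ls r (Ioi 0) x := by gcongr; exact le_self_add
  · -- `x ≲ F`
    have main : ∀ m, x (P m) ≤
        ⨆ n, ENNReal.ofReal ((2:ℝ) ^ (-1 * |((m - Function.invFun τ n : ℤ):ℝ)|)) *
          (c2 * F (P n)) := by
      intro m
      refine le_trans ?_ (le_iSup _ (τ m))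
      set k := Function.invFun τ (τ m) with hk
      have hkm : τ k = τ m := Function.invFun_eq ⟨m, rfl⟩
      have hpm := hρ.pos _ (hP0 m)
      have hpk := hρ.pos _ (hP0 k)
      have t1 : mm (ρ (P m)) (ρ (P k)) ≤ 4 := by
        have a1 := mm_triangle hpm (hP0 (τ m)) hpk
        have a2 := hτm m
        have a3 := hτm k
        rw [hkm] at a3
        rw [mm_comm] at a2
        refine a1.trans ?_
        calc _ ≤ (2:ℝ) * 2 := mul_le_mul a2 a3 (mm_pos (hP0 _) hpk).le (by norm_num)
          _ = 4 := by norm_num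
      have t2 : (2:ℝ) ^ |((m - k : ℤ):ℝ)| ≤ Q2 := by
        have a1 := (hLl (P m) (P k) (hP0 m) (hP0 k)).trans (mul_le_mul_of_nonneg_left t1 hL0.le)
        have e1 : mm (P m) (P k) = (2:ℝ) ^ |((m - k : ℤ):ℝ)| := mm_zpow m k
        rw [e1] at a1
        calc (2:ℝ) ^ |((m - k : ℤ):ℝ)| = (((2:ℝ) ^ |((m - k : ℤ):ℝ)|) ^ δ) ^ δ⁻¹ := by
              rw [← Real.rpow_mul (by positivity), mul_inv_cancel₀ hδ.ne', Real.rpow_one]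
          _ ≤ _ := Real.rpow_le_rpow (by positivity) a1 (by positivity)
      have t3 : 1 ≤ (2:ℝ) ^ (-1 * |((m - k : ℤ):ℝ)|) * Q2 := by
        rw [neg_one_mul, Real.rpow_neg (by norm_num), inv_mul_eq_div, one_le_div (by positivity)]
        exact t2
      have t4 : (1:ℝ≥0∞) ≤ ENNReal.ofReal ((2:ℝ) ^ (-1 * |((m - k : ℤ):ℝ)|)) * ENNReal.ofReal Q2 := by
        rw [← ENNReal.ofReal_mul (by positivity)]
        simpa using t3
      calc x (P m) ≤ C * F (ρ (P m)) := hxF _ (hP0 m)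
        _ ≤ C * (D2 * F (P (τ m))) :=
            mul_le_mul_right (hF2 _ _ hpm (hP0 _) (by rw [mm_comm]; exact hτm m)) _
        _ ≤ (ENNReal.ofReal ((2:ℝ) ^ (-1 * |((m - k : ℤ):ℝ)|)) * ENNReal.ofReal Q2) *
              (C * (D2 * F (P (τ m)))) := le_mul_of_one_le_left zero_le t4
        _ = _ := by rw [hc2]; ring
    calc Ls r (Ioi 0) x ≤ D2 * lr r (fun n => x (P n)) := disc_upper hr x hx2
      _ ≤ D2 * (S2 * lr r (fun n => c2 * F (P n))) := by
          gcongr; exact hsch2 (Function.invFun τ) _ _ main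
      _ ≤ D2 * (S2 * (c2 * (Cl * Ls r (Ioi 0) F))) := by
          rw [lr_const_mul hr]; gcongr; exact hlow F hF2
      _ = D2 * (S2 * (c2 * Cl)) * Ls r (Ioi 0) F := by ring
      _ ≤ C' * Ls r (Ioi 0) F := by gcongr; exact le_add_self

/-! ### Assembling -/

lemma Pot.congr {a b : ℝ → ℝ} (ha : Pot a) (h : ∀ t, 0 < t → b t = a t) : Pot b := by
  refine ⟨fun t ht => by rw [h t ht]; exact ha.pos t ht, fun ε hε => ?_⟩
  obtain ⟨C, hC, hp⟩ := ha.pot ε hε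
  exact ⟨C, hC, fun u v hu hv => by rw [h u hu, h v hv]; exact hp u v hu hv⟩

lemma Ls_wgt {q : ℝ≥0∞} {s : Set ℝ} (hs : MeasurableSet s) (hs0 : s ⊆ Ioi 0) (σ : ℝ) (b : ℝ → ℝ)
    (k : ℝ → ℝ≥0∞) : LqNorm q s (fun u => ENNReal.ofReal (u ^ (-σ - q⁻¹.toReal) * b u) * k u) =
      Ls q s (fun u => ENNReal.ofReal (u ^ (-σ) * b u) * k u) := by
  refine LqNorm_congr hs fun u hu => ?_
  have hu0 : 0 < u := hs0 hu
  rw [← mul_assoc, ← ENNReal.ofReal_mul (by positivity), ← mul_assoc, ← Real.rpow_add hu0]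
  congr 4
  ring

lemma svWgt_eq {q : ℝ≥0∞} {s : Set ℝ} (hs : MeasurableSet s) (hs0 : s ⊆ Ioi 0) (b : ℝ → ℝ) :
    LqNorm q s (svWgt q b) = Ls q s (fun u => ENNReal.ofReal (b u)) := by
  refine LqNorm_congr hs fun u hu => ?_
  have hu0 : 0 < u := hs0 hu
  rw [svWgt, ENNReal.ofReal_mul (by positivity)]

lemma normK_eq (N₀ N₁ : E → ℝ≥0∞) (θ : ℝ) (q : ℝ≥0∞) (b : ℝ → ℝ) (f : E) :
    normK N₀ N₁ θ q b f =
      Ls q (Ioi 0) (fun u => ENNReal.ofReal (u ^ (-θ) * b u) * Kf N₀ N₁ u f) :=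
  Ls_wgt measurableSet_Ioi subset_rfl _ _ _

lemma normL_eq (N₀ N₁ : E → ℝ≥0∞) (σ : ℝ) (r q : ℝ≥0∞) (b a : ℝ → ℝ) (f : E) :
    normL N₀ N₁ σ r q b a f = LL σ r q b a (fun u => Kf N₀ N₁ u f) := by
  refine LqNorm_congr measurableSet_Ioi fun t ht => ?_
  have ht0 : 0 < t := ht
  rw [Ls_wgt measurableSet_Ioo (fun u hu => hu.1), ENNReal.ofReal_mul (by positivity), mul_assoc]

lemma Kf_dbl {a : ℝ → ℝ} (ha : Pot a) {σ : ℝ} (hσ : |σ| ≤ 1) : ∃ D : ℝ, 1 ≤ D ∧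
    ∀ D' : ℝ, D ≤ D' → ∀ (N₀ N₁ : E → ℝ≥0∞) (f : E) (u v : ℝ), 0 < u → 0 < v →
      ENNReal.ofReal (u ^ σ * a u) * Kf N₀ N₁ u f ≤
        ENNReal.ofReal (D' * mm u v ^ (3:ℝ)) * (ENNReal.ofReal (v ^ σ * a v) * Kf N₀ N₁ v f) := by
  obtain ⟨D, hD, h⟩ := ha.pow_mm σ one_pos
  refine ⟨D, hD, fun D' hDD N₀ N₁ f u v hu hv => ?_⟩
  have hm := one_le_mm hu hv
  have hm0 := mm_pos hu hv
  have hav := ha.pos v hv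
  have h1 : u ^ σ * a u ≤ D' * mm u v ^ (2:ℝ) * (v ^ σ * a v) := by
    refine (h u v hu hv).trans (mul_le_mul_of_nonneg_right ?_ (by positivity))
    have : mm u v ^ (|σ| + 1) ≤ mm u v ^ (2:ℝ) :=
      Real.rpow_le_rpow_of_exponent_le hm (by linarith)
    exact mul_le_mul hDD this (by positivity) (by linarith)
  have hD'0 : 0 ≤ D' := by linarith
  refine (mul_le_mul' (ENNReal.ofReal_le_ofReal h1) (Kf_mm N₀ N₁ hu hv f)).trans (le_of_eq ?_)
  have e : mm u v ^ (3:ℝ) = mm u v ^ (2:ℝ) * mm u v := by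
    rw [show (3:ℝ) = 2 + 1 by norm_num, Real.rpow_add_one hm0.ne']
  rw [e, ENNReal.ofReal_mul (q := v ^ σ * a v) (by positivity),
    ENNReal.ofReal_mul hD'0, ENNReal.ofReal_mul hD'0, ENNReal.ofReal_mul (q := mm u v) (by positivity)]
  ring

lemma star_id {t θ θ₀ c₀ c₁ a : ℝ} (ht : 0 < t) (hc₀ : 0 < c₀) (hc₁ : 0 < c₁) :
    ((t ^ (1 - θ₀) * (c₀ / c₁)) ^ (-θ) * a) * (t ^ (-θ₀) * c₀) =
      t ^ (-((1 - θ) * θ₀ + θ)) * (c₀ ^ (1 - θ) * c₁ ^ θ * a) := by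
  rw [Real.mul_rpow (by positivity) (by positivity), Real.div_rpow hc₀.le hc₁.le,
    ← Real.rpow_mul ht.le, show -((1 - θ) * θ₀ + θ) = (1 - θ₀) * -θ + -θ₀ by ring,
    Real.rpow_add ht, Real.rpow_neg hc₁.le θ, show (1 - θ) = -θ + 1 by ring,
    Real.rpow_add_one hc₀.ne', div_inv_eq_mul]
  ring

lemma star_id2 {t θ₀ c₀ c₁ : ℝ} (ht : 0 < t) (hc₁ : 0 < c₁) :
    (t ^ (1 - θ₀) * (c₀ / c₁)) * (t ^ (-1:ℝ) * c₁) = t ^ (-θ₀) * c₀ := by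
  rw [show -θ₀ = (1 - θ₀) + -1 by ring, Real.rpow_add ht]
  field_simp

lemma sup_bd {w : ℝ → ℝ} {t u η ε Cp : ℝ} {b : ℝ → ℝ} (hb : Pot b) (ht : 0 < t) (hu : 0 < u)
    (hw : ∀ t, w t = t ^ (-η) * b t)
    (h : b t ≤ Cp * mm t u ^ ε * b u) {S K : ℝ≥0∞}
    (hS : ENNReal.ofReal (mm u t ^ (-ε)) * (ENNReal.ofReal (w u) * K) ≤ S) :
    K ≤ S * ENNReal.ofReal (Cp / w t) * ENNReal.ofReal ((u / t) ^ η * mm u t ^ (2 * ε)) := by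
  have hbt := hb.pos t ht
  have hbu := hb.pos u hu
  have hm := mm_pos hu ht
  have hwt : 0 < w t := by rw [hw]; positivity
  have hwu : 0 < w u := by rw [hw]; positivity
  rw [mm_comm t u] at h
  have hCp : 0 < Cp := by
    by_contra hc
    have : Cp * mm u t ^ ε * b u ≤ 0 := by
      have h1 : 0 ≤ mm u t ^ ε * b u := by positivity
      nlinarith
    linarith
  have key : 1 ≤ mm u t ^ (-ε) * w u * (Cp / w t * ((u / t) ^ η * mm u t ^ (2 * ε))) := by
    have e1 : mm u t ^ (-ε) * mm u t ^ (2 * ε) = mm u t ^ ε := by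
      rw [← Real.rpow_add hm]; congr 1; ring
    have e2 : (u / t) ^ η = u ^ η / t ^ η := Real.div_rpow hu.le ht.le _
    have e3 : mm u t ^ (-ε) * w u * (Cp / w t * ((u / t) ^ η * mm u t ^ (2 * ε))) =
        (Cp * mm u t ^ ε * b u) / b t := by
      rw [← e1, hw, hw, e2, Real.rpow_neg hu.le, Real.rpow_neg ht.le]
      have : 0 < u ^ η := by positivity
      have : 0 < t ^ η := by positivity
      field_simp
    rw [e3, one_le_div hbt]
    exact h
  have key' : (1:ℝ≥0∞) ≤ ENNReal.ofReal (mm u t ^ (-ε) * w u *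
      (Cp / w t * ((u / t) ^ η * mm u t ^ (2 * ε)))) := by simpa using key
  calc K ≤ ENNReal.ofReal (mm u t ^ (-ε) * w u *
      (Cp / w t * ((u / t) ^ η * mm u t ^ (2 * ε)))) * K := le_mul_of_one_le_left zero_le key'
    _ = ENNReal.ofReal (mm u t ^ (-ε)) * (ENNReal.ofReal (w u) * K) *
        (ENNReal.ofReal (Cp / w t) * ENNReal.ofReal ((u / t) ^ η * mm u t ^ (2 * ε))) := by
        rw [ENNReal.ofReal_mul (by positivity), ENNReal.ofReal_mul (by positivity),
          ENNReal.ofReal_mul (p := Cp / w t) (by positivity)]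
        ring
    _ ≤ S * (ENNReal.ofReal (Cp / w t) * ENNReal.ofReal ((u / t) ^ η * mm u t ^ (2 * ε))) := by
        gcongr
    _ = _ := by ring

theorem theorem12
    (A₀ A₁ : QuasiBanach E)
    (hne : ∃ x : E, x ≠ 0 ∧ A₀.N x ≠ ∞ ∧ A₁.N x ≠ ∞)
    (θ θ₀ : ℝ) (hθ : 0 < θ) (hθ' : θ < 1) (hθ₀ : 0 < θ₀) (hθ₀' : θ₀ < 1)
    (q₀ r₀ r₁ r : ℝ≥0∞) (hq₀ : 0 < q₀) (hr₀ : 0 < r₀) (hr₁ : 0 < r₁) (hr : 0 < r)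
    (a a₀ b₀ b₁ : ℝ → ℝ)
    (h_sv_a : SlowlyVarying a)
    (h_sv_a₀ : SlowlyVarying a₀)
    (h_sv_b₀ : SlowlyVarying b₀)
    (h_sv_b₁ : SlowlyVarying b₁)
    (hfin₀ : LqNorm r₀ (Ioi 1) (svWgt r₀ (fun s => b₀ s / a₀ s)) ≠ ∞)
    (hfin₁ : LqNorm r₁ (Ioo 0 1) (svWgt r₁ (fun s => b₁ s)) ≠ ∞)
    (c₀ c₁ ρ : ℝ → ℝ)
    (hc₀ : ∀ t, c₀ t = a₀ t * (LqNorm r₀ (Ioi t) (svWgt r₀ (fun s => b₀ s / a₀ s))).toReal)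
    (hc₁ : ∀ t, c₁ t = (LqNorm r₁ (Ioo 0 t) (svWgt r₁ (fun s => b₁ s))).toReal)
    (hρ : ∀ t, ρ t = t ^ (1 - θ₀) * (c₀ t / c₁ t)) :
    EquivNorms
      (normK (normL A₀.N A₁.N θ₀ r₀ q₀ b₀ a₀) (normK A₀.N A₁.N 1 r₁ b₁) θ r a)
      (normK A₀.N A₁.N ((1 - θ) * θ₀ + θ) r
        (fun t => c₀ t ^ (1 - θ) * c₁ t ^ θ * a (ρ t))) := by
  have ha := h_sv_a.pot
  have ha₀ := h_sv_a₀.pot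
  have hb₀ := h_sv_b₀.pot
  have hb₁ := h_sv_b₁.pot
  have hba : Pot (fun s => b₀ s / a₀ s) := hb₀.div ha₀
  set B₀ : ℝ → ℝ≥0∞ := fun t => Ls r₀ (Ioi t) (fun s => ENNReal.ofReal (b₀ s / a₀ s)) with hB₀
  set B₁ : ℝ → ℝ≥0∞ := fun t => Ls r₁ (Ioo 0 t) (fun s => ENNReal.ofReal (b₁ s)) with hB₁
  have eB₀ : ∀ t, 0 < t → LqNorm r₀ (Ioi t) (svWgt r₀ (fun s => b₀ s / a₀ s)) = B₀ t :=
    fun t ht => svWgt_eq measurableSet_Ioi (Ioi_subset_Ioi ht.le) _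
  have eB₁ : ∀ t, LqNorm r₁ (Ioo 0 t) (svWgt r₁ (fun s => b₁ s)) = B₁ t :=
    fun t => svWgt_eq measurableSet_Ioo (fun u hu => hu.1) _
  have hE₀ : EPot B₀ := tail_epot hba hr₀
  have hE₁ : EPot B₁ := head_epot hb₁ hr₁
  rw [eB₀ 1 one_pos] at hfin₀
  rw [eB₁ 1] at hfin₁
  have hne₀ : ∀ t, 0 < t → B₀ t ≠ 0 := by
    obtain ⟨C, hC, -, h⟩ := tail_low hba hr₀
    intro t ht h0
    have h1 := (h t ht).1
    have h2 : Ls r₀ (Ioo t (2 * t)) (fun s => ENNReal.ofReal (b₀ s / a₀ s)) ≤ B₀ t :=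
      Ls_mono_set (fun u hu => hu.1) _
    rw [h0, nonpos_iff_eq_zero] at h2
    rw [h2, mul_zero, nonpos_iff_eq_zero, ENNReal.ofReal_eq_zero] at h1
    exact absurd (hba.pos t ht) (not_lt.2 h1)
  have hne₁ : ∀ t, 0 < t → B₁ t ≠ 0 := by
    obtain ⟨C, hC, -, h⟩ := tail_low hb₁ hr₁
    intro t ht h0
    have h1 := (h (t / 2) (half_pos ht)).2
    rw [mul_div_cancel₀ _ two_ne_zero] at h1
    have h2 : Ls r₁ (Ioo (t / 2) t) (fun s => ENNReal.ofReal (b₁ s)) ≤ B₁ t :=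
      Ls_mono_set (Ioo_subset_Ioo_left (half_pos ht).le) _
    rw [h0, nonpos_iff_eq_zero] at h2
    rw [h2, mul_zero, nonpos_iff_eq_zero, ENNReal.ofReal_eq_zero] at h1
    exact absurd (hb₁.pos t ht) (not_lt.2 h1)
  have ht₀ : ∀ t, 0 < t → B₀ t ≠ ∞ := fun t ht => hE₀.ne_top hfin₀ ht
  have ht₁ : ∀ t, 0 < t → B₁ t ≠ ∞ := fun t ht => hE₁.ne_top hfin₁ ht
  have pc₀ : Pot c₀ := (ha₀.mul (hE₀.toReal hfin₀ hne₀)).congr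
    fun t ht => by rw [hc₀, eB₀ t ht]
  have pc₁ : Pot c₁ := (hE₁.toReal hfin₁ hne₁).congr fun t ht => by rw [hc₁, eB₁ t]
  have gρ : Grow ρ ((1 - θ₀) / 2) := by
    have e : ρ = fun t => t ^ (1 - θ₀) * (c₀ t / c₁ t) := funext hρ
    rw [e]
    exact (pc₀.div pc₁).grow (by linarith) (by linarith)
  set aa : ℝ → ℝ := fun t => c₀ t ^ (1 - θ) * c₁ t ^ θ * a (ρ t) with haa
  have paa : Pot aa := ((pc₀.rpow (by linarith)).mul (pc₁.rpow hθ)).mul (ha.comp gρ)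
  set η := (1 - θ) * θ₀ + θ with hη
  have hη0 : θ₀ < η := by rw [hη]; nlinarith
  have hη1 : η < 1 := by rw [hη]; nlinarith
  set ε := min (η - θ₀) (1 - η) / 4 with hεd
  have hε : 0 < ε := by
    have : 0 < min (η - θ₀) (1 - η) := lt_min (by linarith) (by linarith)
    positivity
  have hε1 : 4 * ε ≤ η - θ₀ := by
    have := min_le_left (η - θ₀) (1 - η); linarith
  have hε2 : 4 * ε ≤ 1 - η := by
    have := min_le_right (η - θ₀) (1 - η); linarith
  set X₀ := normL A₀.N A₁.N θ₀ r₀ q₀ b₀ a₀ with hX₀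
  set X₁ := normK A₀.N A₁.N 1 r₁ b₁ with hX₁
  have eX₀ : ∀ g, X₀ g = LL θ₀ r₀ q₀ b₀ a₀ (fun u => Kf A₀.N A₁.N u g) := fun g => normL_eq ..
  have eX₁ : ∀ g, X₁ g = KK r₁ b₁ (fun u => Kf A₀.N A₁.N u g) := fun g => normK_eq ..
  set w : ℝ → ℝ := fun t => t ^ (-η) * aa t with hw
  set W : ℝ → ℝ≥0∞ := fun t => ENNReal.ofReal (t ^ (-θ₀) * a₀ t) * B₀ t with hW
  have eW : ∀ t, 0 < t → W t = ENNReal.ofReal (t ^ (-θ₀) * c₀ t) := by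
    intro t ht
    have := ha₀.pos t ht
    rw [hc₀, eB₀ t ht, ← mul_assoc, ENNReal.ofReal_mul (by positivity),
      ENNReal.ofReal_toReal (ht₀ t ht)]
  have hRW : ∀ t, 0 < t → ENNReal.ofReal (ρ t) * (ENNReal.ofReal (t ^ (-1:ℝ)) * B₁ t) = W t := by
    intro t ht
    have hp := gρ.pos t ht
    rw [eW t ht, ← star_id2 ht (pc₁.pos t ht), ← hρ, ENNReal.ofReal_mul hp.le,
      ENNReal.ofReal_mul (by positivity), hc₁, eB₁, ENNReal.ofReal_toReal (ht₁ t ht)]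
  have hstar : ∀ t, 0 < t →
      ENNReal.ofReal ((ρ t) ^ (-θ) * a (ρ t)) * W t = ENNReal.ofReal (w t) := by
    intro t ht
    have hp := gρ.pos t ht
    have := ha.pos _ hp
    rw [eW t ht, ← ENNReal.ofReal_mul (by positivity)]
    congr 1
    have := star_id (θ := θ) (θ₀ := θ₀) (a := a (ρ t)) ht (pc₀.pos t ht) (pc₁.pos t ht)
    rw [← hρ] at this
    exact this
  obtain ⟨Cl, hCl, hlow⟩ := lower_pt A₀ A₁ (θ₀ := θ₀) ha₀ hb₀ hb₁ hr₀ hq₀ hr₁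
  obtain ⟨Cu, hCu, hupp⟩ := upper_pt A₀ A₁ hθ₀ (show θ₀ < η - 2 * ε by linarith)
    (show η - 2 * ε ≤ η + 2 * ε by linarith) (by linarith) ha₀ hb₀ hb₁ hr₀ hq₀ hr₁
  obtain ⟨Cp, hCp, hpot⟩ := paa.pot ε hε
  have hCp0 : 0 < Cp := by linarith
  obtain ⟨D1, hD1, hd1⟩ := Kf_dbl (E := E) ha (σ := -θ) (by rw [abs_neg, abs_of_pos hθ]; exact hθ'.le)
  obtain ⟨D2, hD2, hd2⟩ := Kf_dbl (E := E) paa (σ := -η)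
    (by rw [abs_neg, abs_of_pos (by linarith)]; exact hη1.le)
  set C : ℝ≥0∞ := max 1 (max Cl (Cu * ENNReal.ofReal Cp)) with hCdef
  have hC : C ≠ ∞ := by
    simp [hCdef, hCl, ENNReal.mul_eq_top, hCu]
  have hC0 : C ≠ 0 := (lt_of_lt_of_le one_pos (le_max_left _ _)).ne'
  have hClC : Cl ≤ C := (le_max_left _ _).trans (le_max_right _ _)
  have hCuC : Cu * ENNReal.ofReal Cp ≤ C := (le_max_right _ _).trans (le_max_right _ _)
  obtain ⟨C', hC', hout⟩ := outer (by linarith) gρ hr (D := max D1 D2) (p := 3) (ε := ε)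
    (hD1.trans (le_max_left _ _)) (by norm_num) hε hC
  refine ⟨max 1 C', lt_of_lt_of_le one_pos (le_max_left _ _), by simp [hC'], fun f => ?_⟩
  have hm1 : max 1 C' ≠ ∞ := by simp [hC']
  have hm0 : max 1 C' ≠ 0 := (lt_of_lt_of_le one_pos (le_max_left _ _)).ne'
  have main := hout (fun u => ENNReal.ofReal (u ^ (-θ) * a u) * Kf X₀ X₁ u f)
    (fun u => ENNReal.ofReal (u ^ (-η) * aa u) * Kf A₀.N A₁.N u f)
    (hd1 _ (le_max_left _ _) X₀ X₁ f) (hd2 _ (le_max_right _ _) A₀.N A₁.N f) ?_ ?_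
  · rw [normK_eq, normK_eq]
    refine ⟨?_, main.1.trans (mul_le_mul_left (le_max_right _ _) _)⟩
    rw [mul_comm, ← div_eq_mul_inv, ENNReal.div_le_iff hm0 hm1, mul_comm]
    exact main.2.trans (mul_le_mul_left (le_max_right _ _) _)
  · -- lower pointwise estimate
    intro t ht
    have hp := gρ.pos t ht
    have h1 : W t * Kf A₀.N A₁.N t f ≤ C * Kf X₀ X₁ (ρ t) f := by
      rw [Kf, Kf, ENNReal.mul_iInf_of_ne hC0 hC]
      refine le_iInf fun g => ?_
      rw [eX₀, eX₁]
      exact (hlow t _ _ f ht ENNReal.ofReal_ne_top rfl (hRW t ht) g).trans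
        (mul_le_mul_left hClC _)
    calc ENNReal.ofReal (t ^ (-η) * aa t) * Kf A₀.N A₁.N t f
        = ENNReal.ofReal ((ρ t) ^ (-θ) * a (ρ t)) * (W t * Kf A₀.N A₁.N t f) := by
          rw [← mul_assoc (ENNReal.ofReal ((ρ t) ^ (-θ) * a (ρ t))), hstar t ht]
      _ ≤ ENNReal.ofReal ((ρ t) ^ (-θ) * a (ρ t)) * (C * Kf X₀ X₁ (ρ t) f) :=
          mul_le_mul_right h1 _
      _ = _ := by ring
  · -- upper pointwise estimate
    intro t ht
    have hp := gρ.pos t ht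
    set T := ⨆ u : Ioi (0:ℝ), ENNReal.ofReal (mm u t ^ (-ε)) *
      (ENNReal.ofReal ((u:ℝ) ^ (-η) * aa u) * Kf A₀.N A₁.N u f) with hT
    rw [mul_comm C, ← ENNReal.div_le_iff hC0 hC]
    refine le_of_forall_gt_imp_ge_of_dense fun S hS => ?_
    rw [ENNReal.div_le_iff hC0 hC, mul_comm S]
    by_cases hSt : S = ∞
    · rw [hSt, ENNReal.mul_top hC0]; exact le_top
    have hS0 : S ≠ 0 := (lt_of_le_of_lt zero_le hS).ne'
    have haat := paa.pos t ht
    have hwt : 0 < w t := by simp only [hw]; positivity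
    have hb : ∀ u, 0 < u → Kf A₀.N A₁.N u f ≤
        S * ENNReal.ofReal (Cp / w t) * ENNReal.ofReal ((u / t) ^ η * mm u t ^ (2 * ε)) := by
      intro u hu
      refine sup_bd paa ht hu (fun _ => rfl) (hpot t u ht hu) ?_
      refine le_trans ?_ hS.le
      exact le_iSup (fun u : Ioi (0:ℝ) => ENNReal.ofReal (mm u t ^ (-ε)) *
        (ENNReal.ofReal ((u:ℝ) ^ (-η) * aa u) * Kf A₀.N A₁.N u f)) ⟨u, hu⟩
    obtain ⟨g, hg⟩ := hupp t (ENNReal.ofReal (ρ t)) (W t) (S * ENNReal.ofReal (Cp / w t)) f ht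
      (mul_ne_zero hS0 (by rw [ne_eq, ENNReal.ofReal_eq_zero, not_le]; positivity))
      (ENNReal.mul_ne_top hSt ENNReal.ofReal_ne_top) rfl (hRW t ht) (by
        intro u hu hut
        refine (hb u hu).trans (le_of_eq ?_)
        rw [mm_of_le hu hut, ← inv_div u t, Real.inv_rpow (by positivity),
          ← Real.rpow_neg (by positivity), ← Real.rpow_add (by positivity), sub_eq_add_neg]) (by
        intro u hut
        have hu := ht.trans_le hut
        refine (hb u hu).trans (le_of_eq ?_)
        rw [mm_comm, mm_of_le ht hut, ← Real.rpow_add (by positivity)])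
    have h1 : Kf X₀ X₁ (ρ t) f ≤ Cu * (S * ENNReal.ofReal (Cp / w t)) * W t := by
      refine (iInf_le _ g).trans ?_
      rw [eX₀, eX₁]
      exact hg
    calc ENNReal.ofReal ((ρ t) ^ (-θ) * a (ρ t)) * Kf X₀ X₁ (ρ t) f
        ≤ ENNReal.ofReal ((ρ t) ^ (-θ) * a (ρ t)) *
          (Cu * (S * ENNReal.ofReal (Cp / w t)) * W t) := mul_le_mul_right h1 _
      _ = Cu * (S * ENNReal.ofReal (Cp / w t)) *
          (ENNReal.ofReal ((ρ t) ^ (-θ) * a (ρ t)) * W t) := by ring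
      _ = Cu * (ENNReal.ofReal (Cp / w t) * ENNReal.ofReal (w t)) * S := by
          rw [hstar t ht]; ring
      _ = Cu * ENNReal.ofReal Cp * S := by
          rw [← ENNReal.ofReal_mul (by positivity), div_mul_cancel₀ _ hwt.ne']
      _ ≤ C * S := mul_le_mul_left hCuC _

end
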